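/- arXiv:2206.03533 — 6 statements merged into one kernel-verified Lean document; each statement's English description precedes it below -/
import Mathlib

section
/- Every finitely generated w-FP-projective R-module is finitely presented. -/
open CategoryTheory

universe u

noncomputable section

variable (R : Type u) [CommRing R]

/-- The Ext group `Ext^n_R(M, N)` as an `R`-module (via `ModuleCat`). -/
def extMod (M N : Type u) [AddCommGroup M] [Module R M]
    [AddCommGroup N] [Module R N] (n : ℕ) : ModuleCat R :=
  ((Ext R (ModuleCat R) n).obj (Opposite.op (ModuleCat.of R M))).obj (ModuleCat.of R N)

/-- `J` is a Glaz–Vasconcelos ideal: finitely generated and the natural map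
`R → Hom_R(J, R)` is bijective. -/
def IsGVIdeal (J : Ideal R) : Prop :=
  J.FG ∧ Function.Bijective (fun r : R => (r • J.subtype : J →ₗ[R] R))

/-- A module is GV-torsion if every element is annihilated by some GV-ideal. -/
def IsGVTorsion (M : Type u) [AddCommGroup M] [Module R M] : Prop :=
  ∀ x : M, ∃ J : Ideal R, IsGVIdeal R J ∧ ∀ j ∈ J, j • x = 0

/-- An ideal `I` is a `w`-ideal if it is `w`-closed: whenever `J x ⊆ I` for some
GV-ideal `J`, one has `x ∈ I`. -/
def IsWIdeal (I : Ideal R) : Prop :=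
  ∀ (x : R) (J : Ideal R), IsGVIdeal R J → (∀ j ∈ J, j * x ∈ I) → x ∈ I

/-- `R` is a DW-ring if every maximal ideal is a `w`-ideal. -/
def IsDWRing : Prop :=
  ∀ m : Ideal R, m.IsMaximal → IsWIdeal R m

/-- `A` is absolutely `w`-pure if `Ext^1_R(N, A)` is GV-torsion for every
finitely presented module `N`. -/
def IsAbsolutelyWPure (A : Type u) [AddCommGroup A] [Module R A] : Prop :=
  ∀ (N : Type u) [AddCommGroup N] [Module R N], Module.FinitePresentation R N →
    IsGVTorsion R (extMod R N A 1)

/-- `M` is `w`-FP-projective if `Ext^1_R(M, A) = 0` for every absolutely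
`w`-pure module `A`. -/
def IsWFPProjective (M : Type u) [AddCommGroup M] [Module R M] : Prop :=
  ∀ (A : Type u) [AddCommGroup A] [Module R A], IsAbsolutelyWPure R A →
    Subsingleton (extMod R M A 1)

end

lemma aux_subsingleton_iff (R : Type u) [CommRing R] (M A : Type u) [AddCommGroup M] [Module R M]
    [AddCommGroup A] [Module R A] (P : ProjectiveResolution (ModuleCat.of R M)) :
    Subsingleton (extMod R M A 1) ↔
      ∀ g : P.complex.X 1 ⟶ ModuleCat.of R A, P.complex.d 2 1 ≫ g = 0 →
        ∃ h : P.complex.X 0 ⟶ ModuleCat.of R A, P.complex.d 1 0 ≫ h = g := by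
  rw [← ModuleCat.isZero_iff_subsingleton]
  rw [extMod, (P.isoExt (R := R) 1 (ModuleCat.of R A)).isZero_iff,
    ← HomologicalComplex.exactAt_iff_isZero_homology,
    HomologicalComplex.exactAt_iff' _ 0 1 2 (by simp) (by simp),
    ShortComplex.moduleCat_exact_iff]
  rfl

/-- extension property relative to a surjection -/
def ExtProp (R : Type u) [CommRing R] {F M : Type u} (A : Type u) [AddCommGroup F] [Module R F]
    [AddCommGroup M] [Module R M]
    [AddCommGroup A] [Module R A] (p : F →ₗ[R] M) : Prop :=
  ∀ g : LinearMap.ker p →ₗ[R] A, ∃ h : F →ₗ[R] A, ∀ x : LinearMap.ker p, h x = g x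

lemma extProp_transfer (R : Type u) [CommRing R] {F F' M : Type u} (A : Type u)
    [AddCommGroup F] [Module R F] [AddCommGroup F'] [Module R F']
    [AddCommGroup M] [Module R M]
    [AddCommGroup A] [Module R A] [Module.Projective R F] [Module.Projective R F']
    (p : F →ₗ[R] M) (p' : F' →ₗ[R] M) (hp : Function.Surjective p) (hp' : Function.Surjective p')
    (H : ExtProp R A p) : ExtProp R A p' := by
  intro g
  obtain ⟨φ, hφ⟩ := Module.projective_lifting_property p' p hp'
  obtain ⟨ψ, hψ⟩ := Module.projective_lifting_property p p' hp
  have hφ' : ∀ x, p' (φ x) = p x := fun x => LinearMap.congr_fun hφ x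
  have hψ' : ∀ x, p (ψ x) = p' x := fun x => LinearMap.congr_fun hψ x
  let φK : LinearMap.ker p →ₗ[R] LinearMap.ker p' :=
    φ.restrict (fun x hx => by simpa [hφ'] using hx)
  obtain ⟨h, hh⟩ := H (g ∘ₗ φK)
  let δ : F' →ₗ[R] LinearMap.ker p' :=
    (LinearMap.id - φ ∘ₗ ψ).codRestrict _ (fun x => by simp [hφ', hψ'])
  refine ⟨h ∘ₗ ψ + g ∘ₗ δ, fun x => ?_⟩
  have hx : ψ x ∈ LinearMap.ker p := by
    have := x.2
    simp only [LinearMap.mem_ker] at this ⊢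
    rw [hψ', this]
  have h1 := hh ⟨ψ x, hx⟩
  simp only [LinearMap.add_apply, LinearMap.comp_apply] at h1 ⊢
  rw [h1, ← map_add]
  congr 1
  ext
  simp [φK, δ]

lemma subsingleton_iff_extProp (R : Type u) [CommRing R] {F M : Type u} (A : Type u)
    [AddCommGroup F] [Module R F]
    [AddCommGroup M] [Module R M]
    [AddCommGroup A] [Module R A] [Module.Projective R F]
    (p : F →ₗ[R] M) (hp : Function.Surjective p) :
    Subsingleton (extMod R M A 1) ↔ ExtProp R A p := by
  let P : ProjectiveResolution (ModuleCat.of R M) := projectiveResolution _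
  let q : P.complex.X 0 →ₗ[R] M := (P.π.f 0).hom
  have hq : Function.Surjective q := (ModuleCat.epi_iff_surjective (P.π.f 0)).1 inferInstance
  have : Module.Projective R (P.complex.X 0) :=
    (IsProjective.iff_projective (P.complex.X 0)).2 (P.projective 0)
  have e0 := (ShortComplex.moduleCat_exact_iff _).1 P.exact₀
  have e1 := (ShortComplex.moduleCat_exact_iff _).1 (P.exact_succ 0)
  have z0 : ∀ x, q ((P.complex.d 1 0).hom x) = 0 := fun x =>
    LinearMap.congr_fun (congrArg ModuleCat.Hom.hom P.complex_d_comp_π_f_zero) x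
  rw [aux_subsingleton_iff R M A P]
  have key : (∀ g : P.complex.X 1 ⟶ ModuleCat.of R A, P.complex.d 2 1 ≫ g = 0 →
        ∃ h : P.complex.X 0 ⟶ ModuleCat.of R A, P.complex.d 1 0 ≫ h = g) ↔ ExtProp R A q := by
    let d : P.complex.X 1 →ₗ[R] LinearMap.ker q :=
      (P.complex.d 1 0).hom.codRestrict _ (fun x => z0 x)
    have hd : Function.Surjective d := by
      rintro ⟨y, hy⟩
      obtain ⟨x, hx⟩ := e0 y hy
      exact ⟨x, Subtype.ext hx⟩
    constructor
    · intro H g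
      obtain ⟨h, hh⟩ := H (ModuleCat.ofHom (g ∘ₗ d)) (by
        ext x
        have : d ((P.complex.d 2 1).hom x) = 0 := Subtype.ext
          (LinearMap.congr_fun (congrArg ModuleCat.Hom.hom (P.complex.d_comp_d 2 1 0)) x)
        change g (d ((P.complex.d 2 1).hom x)) = 0
        rw [this, map_zero])
      refine ⟨h.hom, fun y => ?_⟩
      obtain ⟨x, rfl⟩ := hd y
      exact LinearMap.congr_fun (congrArg ModuleCat.Hom.hom hh) x
    · intro H g hg
      have hker : LinearMap.ker d ≤ LinearMap.ker g.hom := by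
        intro x hx
        obtain ⟨y, hy⟩ := e1 x (congrArg Subtype.val (LinearMap.mem_ker.1 hx))
        have := LinearMap.congr_fun (congrArg ModuleCat.Hom.hom hg) y
        rw [LinearMap.mem_ker, ← hy]
        exact this
      obtain ⟨h, hh⟩ := H ((LinearMap.ker d).liftQ g.hom hker ∘ₗ
        (d.quotKerEquivOfSurjective hd).symm.toLinearMap)
      refine ⟨ModuleCat.ofHom h, ?_⟩
      ext x
      have h1 := hh (d x)
      have h2 : (d.quotKerEquivOfSurjective hd).symm (d x) = (LinearMap.ker d).mkQ x := by
        rw [LinearEquiv.symm_apply_eq]; rfl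
      simp only [LinearMap.comp_apply, LinearEquiv.coe_coe, h2] at h1
      exact h1
  rw [key]
  exact ⟨extProp_transfer R A q p hq hp, extProp_transfer R A p q hp hq⟩

lemma isGVTorsion_of_subsingleton (R : Type u) [CommRing R] (M : Type u) [AddCommGroup M]
    [Module R M] [Subsingleton M] : IsGVTorsion R M := by
  refine fun x => ⟨⊤, ⟨⟨{1}, by simp⟩, ?_, ?_⟩, fun j _ => Subsingleton.elim _ _⟩
  · intro r s h
    have := LinearMap.congr_fun h ⟨1, trivial⟩
    simpa using this
  · intro f
    refine ⟨f ⟨1, trivial⟩, ?_⟩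
    ext x
    have : x = (x : R) • (⟨1, trivial⟩ : (⊤ : Ideal R)) := by ext; simp
    conv_rhs => rw [this, map_smul]
    simp [mul_comm]

section construction

variable (R : Type u) [CommRing R] {I : Type u} [SemilatticeSup I] [Nonempty I] (E : I → Type u)
  [∀ i, AddCommGroup (E i)] [∀ i, Module R (E i)]

/-- eventually vanishing families -/
def EvSub : Submodule R (∀ i, E i) where
  carrier := {f | ∃ i, ∀ j, i ≤ j → f j = 0}
  zero_mem' := ⟨Classical.arbitrary I, fun _ _ => rfl⟩
  add_mem' := by
    rintro f g ⟨i, hi⟩ ⟨j, hj⟩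
    refine ⟨i ⊔ j, fun k hk => ?_⟩
    simp [hi k (le_sup_left.trans hk), hj k (le_sup_right.trans hk)]
  smul_mem' := by
    rintro r f ⟨i, hi⟩
    exact ⟨i, fun k hk => by simp [hi k hk]⟩

lemma EvSub_bound {F : Type u} [AddCommGroup F] [Module R F] [hF : Module.Finite R F]
    (h : F →ₗ[R] EvSub R E) : ∃ i, ∀ x j, i ≤ j → (h x).1 j = 0 := by
  classical
  obtain ⟨s, hs⟩ := hF.fg_top
  choose b hb using fun x => (h x).2
  obtain ⟨i, hi⟩ := (s.image b).exists_le
  refine ⟨i, fun x j hij => ?_⟩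
  have : x ∈ Submodule.span R (s : Set F) := hs ▸ trivial
  induction this using Submodule.span_induction with
  | mem x hx => exact hb x j ((hi _ (Finset.mem_image_of_mem b hx)).trans hij)
  | zero => simp
  | add x y _ _ hx hy => simp [hx, hy]
  | smul r x _ hx => simp [hx]

lemma EvSub_absPure [∀ i, Module.Injective R (E i)] : IsAbsolutelyWPure R (EvSub R E) := by
  classical
  intro N _ _ hN
  obtain ⟨n, p, hp⟩ := Module.Finite.exists_fin' R N
  suffices Subsingleton (extMod R N (EvSub R E) 1) from isGVTorsion_of_subsingleton R _
  rw [subsingleton_iff_extProp R _ p hp]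
  intro g
  have : Module.Finite R (LinearMap.ker p) :=
    .of_fg (Module.FinitePresentation.fg_ker p hp)
  obtain ⟨i, hi⟩ := EvSub_bound R E g
  have ext1 : ∀ j, ∃ h : (Fin n → R) →ₗ[R] E j, ∀ x : LinearMap.ker p, h x = (g x).1 j := by
    intro j
    exact Module.Injective.out (LinearMap.ker p).subtype Subtype.val_injective
      (LinearMap.proj j ∘ₗ (EvSub R E).subtype ∘ₗ g)
  choose h hh using ext1
  let h' : (Fin n → R) →ₗ[R] ∀ j, E j := LinearMap.pi fun j => if i ≤ j then 0 else h j
  refine ⟨h'.codRestrict _ fun x => ⟨i, fun j hj => by simp [h', hj]⟩, fun x => ?_⟩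
  ext j
  change h' x j = (g x).1 j
  by_cases hj : i ≤ j
  · simp [h', hj, hi x j hj]
  · simp [h', hj, hh]

end construction

lemma exists_injective_embedding (R : Type u) [CommRing R] (M : Type u) [AddCommGroup M]
    [Module R M] : ∃ (E : ModuleCat.{u} R) (f : M →ₗ[R] E), Module.Injective R E ∧
      Function.Injective f := by
  let J := Injective.under (ModuleCat.of R M)
  refine ⟨J, (Injective.ι (ModuleCat.of R M)).hom,
    ?_, ?_⟩
  · have : Injective (ModuleCat.of R J) := Injective.injective_under (ModuleCat.of R M)
    exact Module.injective_module_of_injective_object R J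
  exact (ModuleCat.mono_iff_injective (Injective.ι (ModuleCat.of R M))).1 inferInstance

/-- Every finitely generated `w`-FP-projective module is finitely presented. -/
theorem finitePresentation_of_wFPProjective (R : Type u) [CommRing R]
    (M : Type u) [AddCommGroup M] [Module R M] [Module.Finite R M]
    (hM : IsWFPProjective R M) : Module.FinitePresentation R M := by
  classical
  obtain ⟨n, p, hp⟩ := Module.Finite.exists_fin' R M
  refine Module.finitePresentation_of_surjective p hp ?_
  let K := LinearMap.ker p
  let S : Finset K → Submodule R K := fun s => Submodule.span R (s : Set K)
  choose E f hE hf using fun s : Finset K => exists_injective_embedding R (K ⧸ S s)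
  have hA := hM _ (EvSub_absPure R (fun s => (E s : Type u)))
  rw [subsingleton_iff_extProp R _ p hp] at hA
  let g : K →ₗ[R] EvSub R (fun s => (E s : Type u)) :=
    (LinearMap.pi fun s => f s ∘ₗ (S s).mkQ).codRestrict _ (fun x => by
      refine ⟨{x}, fun s hs => ?_⟩
      have : x ∈ S s := Submodule.subset_span (by simpa using hs)
      have h0 : (S s).mkQ x = 0 := by simpa using this
      rw [LinearMap.pi_apply, LinearMap.comp_apply, h0, map_zero])
  obtain ⟨h, hh⟩ := hA g
  obtain ⟨s, hs⟩ := EvSub_bound R _ h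
  have htop : S s = ⊤ := by
    rw [eq_top_iff]
    intro x _
    have h1 := hs x s le_rfl
    rw [hh x] at h1
    have h2 : f s ((S s).mkQ x) = 0 := h1
    have h3 := (map_eq_zero_iff _ (hf s)).1 h2
    simpa using h3
  exact (Submodule.fg_top _).1 ⟨s, htop⟩
end

section
/- If R is a Prüfer v-multiplication domain (PvMD), then every w-FP-projective R-module has projective dimension at most 1. -/
open CategoryTheory

universe u

/-- `p` is a maximal `w`-ideal: a proper `w`-ideal maximal among proper `w`-ideals. -/
def IsMaximalWIdeal (R : Type u) [CommRing R] (p : Ideal R) : Prop :=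
  IsWIdeal R p ∧ p ≠ ⊤ ∧ ∀ q : Ideal R, IsWIdeal R q → q ≠ ⊤ → p ≤ q → p = q

section helpers

variable {R : Type u} [CommRing R]

lemma kill_iff_of_iso {A B : ModuleCat.{u} R} (e : A ≅ B) (r : R) :
    (∀ x : A, r • x = 0) ↔ (∀ x : B, r • x = 0) := by
  have l := e.toLinearEquiv
  constructor
  · intro h x
    apply l.symm.injective
    rw [map_smul, h, map_zero]
  · intro h x
    apply l.injective
    rw [map_smul, h, map_zero]

lemma kill_homology_iff (S : ShortComplex (ModuleCat.{u} R)) (r : R) :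
    (∀ x : S.homology, r • x = 0) ↔
      ∀ y : S.X₂, S.g.hom y = 0 → ∃ z : S.X₁, S.f.hom z = r • y := by
  rw [kill_iff_of_iso S.moduleCatHomologyIso r]
  change (∀ x : (LinearMap.ker S.g.hom ⧸ LinearMap.range S.moduleCatToCycles), r • x = 0) ↔ _
  constructor
  · intro h y hy
    have := h (Submodule.Quotient.mk ⟨y, hy⟩)
    rw [← Submodule.Quotient.mk_smul, Submodule.Quotient.mk_eq_zero] at this
    obtain ⟨z, hz⟩ := this
    exact ⟨z, congrArg Subtype.val hz⟩
  · intro h x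
    obtain ⟨⟨y, hy⟩, rfl⟩ := Submodule.Quotient.mk_surjective _ x
    obtain ⟨z, hz⟩ := h y hy
    rw [← Submodule.Quotient.mk_smul, Submodule.Quotient.mk_eq_zero]
    exact ⟨z, Subtype.ext hz⟩

lemma kill_extMod_iff (M N : Type u) [AddCommGroup M] [Module R M]
    [AddCommGroup N] [Module R N] (P : ProjectiveResolution (ModuleCat.of R M)) (n : ℕ) (r : R) :
    (∀ x : extMod R M N (n + 1), r • x = 0) ↔
      ∀ f : P.complex.X (n + 1) →ₗ[R] N, f ∘ₗ (P.complex.d (n + 2) (n + 1)).hom = 0 →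
        ∃ g : P.complex.X n →ₗ[R] N, g ∘ₗ (P.complex.d (n + 1) n).hom = r • f := by
  unfold extMod
  rw [kill_iff_of_iso (P.isoExt (n + 1) (ModuleCat.of R N)) r,
    kill_iff_of_iso ((P.complex.linearYonedaObj R (ModuleCat.of R N)).homologyIsoSc'
        n (n + 1) (n + 2) (by simp) (by simp)) r, kill_homology_iff]
  constructor
  · intro h f hf
    obtain ⟨z, hz⟩ := h (ModuleCat.ofHom f) (by
      change P.complex.d (n + 2) (n + 1) ≫ ModuleCat.ofHom f = 0
      ext x
      exact LinearMap.congr_fun hf x)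
    refine ⟨ModuleCat.Hom.hom z, ?_⟩
    change P.complex.d (n + 1) n ≫ z = r • ModuleCat.ofHom f at hz
    ext x
    exact LinearMap.congr_fun (congrArg ModuleCat.Hom.hom hz) x
  · intro h y hy
    change P.complex.d (n + 2) (n + 1) ≫ y = 0 at hy
    obtain ⟨g, hg⟩ := h (ModuleCat.Hom.hom y) (by
      ext x
      exact LinearMap.congr_fun (congrArg ModuleCat.Hom.hom hy) x)
    refine ⟨ModuleCat.ofHom g, ?_⟩
    change P.complex.d (n + 1) n ≫ ModuleCat.ofHom g = r • y
    ext x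
    exact LinearMap.congr_fun hg x

lemma subsingleton_iff_kill_one (A : ModuleCat.{u} R) :
    Subsingleton A ↔ ∀ x : A, (1 : R) • x = 0 := by
  constructor
  · intro h x
    exact Subsingleton.elim _ _
  · intro h
    exact ⟨fun a b => by rw [← one_smul R a, ← one_smul R b, h, h]⟩

/-- Extending a map that kills the kernel, into an injective module. -/
lemma exists_extend_of_ker_le {E X Y : Type u} [AddCommGroup E] [Module R E]
    [AddCommGroup X] [Module R X] [AddCommGroup Y] [Module R Y] [hE : Module.Injective R E]
    (d : X →ₗ[R] Y) (f : X →ₗ[R] E) (h : LinearMap.ker d ≤ LinearMap.ker f) :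
    ∃ g : Y →ₗ[R] E, g ∘ₗ d = f := by
  obtain ⟨g, hg⟩ := hE.out ((LinearMap.ker d).liftQ d le_rfl)
    (LinearMap.ker_eq_bot.1 (Submodule.ker_liftQ_eq_bot' _ d rfl)) ((LinearMap.ker d).liftQ f h)
  refine ⟨g, ?_⟩
  ext x
  simpa using hg (Submodule.Quotient.mk x)

lemma exact_resolution {M : Type u} [AddCommGroup M] [Module R M]
    (P : ProjectiveResolution (ModuleCat.of R M)) (n : ℕ) :
    LinearMap.range (P.complex.d (n + 2) (n + 1)).hom =
      LinearMap.ker (P.complex.d (n + 1) n).hom :=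
  (P.exact_succ n).moduleCat_range_eq_ker

lemma ext_two_of_ext_one {M N E : Type u} [AddCommGroup M] [Module R M]
    [AddCommGroup N] [Module R N] [AddCommGroup E] [Module R E] [Module.Injective R E]
    (i : N →ₗ[R] E) (hi : Function.Injective i)
    (h : Subsingleton (extMod R M (E ⧸ LinearMap.range i) 1)) :
    Subsingleton (extMod R M N 2) := by
  let P := ProjectiveResolution.of (ModuleCat.of R M)
  have hproj : Module.Projective R (P.complex.X 0) :=
    (IsProjective.iff_projective (P.complex.X 0)).2 (P.projective 0)
  rw [subsingleton_iff_kill_one] at h ⊢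
  rw [kill_extMod_iff _ _ P] at h ⊢
  intro f hf
  obtain ⟨g, hg⟩ := exists_extend_of_ker_le (P.complex.d 2 1).hom (i ∘ₗ f) (by
    rw [← exact_resolution P 1]
    rintro _ ⟨x, rfl⟩
    have := LinearMap.congr_fun hf x
    simp only [LinearMap.comp_apply, LinearMap.zero_apply] at this
    simp [this])
  obtain ⟨t, ht⟩ := h ((LinearMap.range i).mkQ ∘ₗ g) (by
    rw [LinearMap.comp_assoc, hg]
    ext x
    simp)
  obtain ⟨t', ht'⟩ := Module.projective_lifting_property (LinearMap.range i).mkQ t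
    (Submodule.mkQ_surjective _)
  rw [one_smul] at ht
  let e := LinearEquiv.ofInjective i hi
  have hk : ∀ x, (g - t' ∘ₗ (P.complex.d 1 0).hom) x ∈ LinearMap.range i := by
    intro x
    rw [← Submodule.Quotient.mk_eq_zero, ← Submodule.mkQ_apply]
    have h1 := LinearMap.congr_fun ht x
    rw [← ht'] at h1
    simp only [LinearMap.comp_apply] at h1
    simp only [LinearMap.sub_apply, LinearMap.comp_apply, map_sub, h1, sub_self]
  refine ⟨e.symm.toLinearMap ∘ₗ LinearMap.codRestrict _ _ hk, ?_⟩
  ext x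
  apply hi
  have h2 : ∀ y : LinearMap.range i, i (e.symm y) = y := fun y =>
    congrArg Subtype.val (e.apply_symm_apply y)
  have h3 := LinearMap.congr_fun hg x
  have h4 : (P.complex.d 1 0).hom ((P.complex.d 2 1).hom x) = 0 := by
    have : (P.complex.d 2 1).hom x ∈ LinearMap.ker (P.complex.d 1 0).hom := by
      rw [← exact_resolution P 0]; exact ⟨x, rfl⟩
    exact this
  simp only [LinearMap.comp_apply] at h3
  simp [h2, h3, h4]

/-- Annihilation of `Ext^1` may be tested on any projective presentation. -/
lemma kill_ext_one {N A F : Type u} [AddCommGroup N] [Module R N] [AddCommGroup A] [Module R A]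
    [AddCommGroup F] [Module R F] [Module.Projective R F]
    (π : F →ₗ[R] N) (hπ : Function.Surjective π) (r : R)
    (h : ∀ f : LinearMap.ker π →ₗ[R] A, ∃ g : F →ₗ[R] A, ∀ x : LinearMap.ker π, g x = r • f x)
    (x : extMod R N A 1) : r • x = 0 := by
  let P := ProjectiveResolution.of (ModuleCat.of R N)
  have hproj : Module.Projective R (P.complex.X 0) :=
    (IsProjective.iff_projective (P.complex.X 0)).2 (P.projective 0)
  revert x
  rw [kill_extMod_iff _ _ P]
  intro f hf
  let d := (P.complex.d 1 0).hom
  obtain ⟨ε, hε, hex⟩ : ∃ ε : P.complex.X 0 →ₗ[R] N, Function.Surjective ε ∧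
      LinearMap.range d = LinearMap.ker ε := by
    refine ⟨(P.π.f 0).hom, ?_, ?_⟩
    · exact (ModuleCat.epi_iff_surjective (P.π.f 0)).1 inferInstance
    · exact P.exact₀.moduleCat_range_eq_ker
  obtain ⟨α, hα⟩ := Module.projective_lifting_property π ε hπ
  obtain ⟨β, hβ⟩ := Module.projective_lifting_property ε π hε
  have hα' := LinearMap.congr_fun hα
  have hβ' := LinearMap.congr_fun hβ
  simp only [LinearMap.comp_apply] at hα' hβ'
  have hker : LinearMap.ker d ≤ LinearMap.ker f := by
    rw [← exact_resolution P 0]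
    rintro _ ⟨x, rfl⟩
    exact LinearMap.congr_fun hf x
  -- the map induced on the range of d
  let fb : LinearMap.ker ε →ₗ[R] A :=
    ((LinearMap.ker d).liftQ f hker) ∘ₗ (d.quotKerEquivRange.symm.toLinearMap) ∘ₗ
      (LinearEquiv.ofEq _ _ hex.symm).toLinearMap
  have hfb : ∀ (x) (hx : d x ∈ LinearMap.ker ε), fb ⟨d x, hx⟩ = f x := by
    intro x hx
    have : d.quotKerEquivRange.symm ⟨d x, LinearMap.mem_range_self d x⟩ =
      Submodule.Quotient.mk x := by
      rw [LinearEquiv.symm_apply_eq]; rfl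
    change (LinearMap.ker d).liftQ f hker (d.quotKerEquivRange.symm ⟨d x, _⟩) = f x
    rw [this]
    simp
  obtain ⟨g, hg⟩ := h (fb ∘ₗ β.restrict (p := LinearMap.ker π) (q := LinearMap.ker ε)
    (fun x hx => by simpa [hβ'] using hx))
  have hmem : ∀ x, ((LinearMap.id : P.complex.X 0 →ₗ[R] P.complex.X 0) - β ∘ₗ α) x ∈ LinearMap.ker ε := by
    intro x; simp [hα', hβ']
  refine ⟨g ∘ₗ α + r • fb ∘ₗ LinearMap.codRestrict _ _ hmem, ?_⟩
  ext x
  have hdx : ε (d x) = 0 := by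
    have : d x ∈ LinearMap.ker ε := by rw [← hex]; exact ⟨x, rfl⟩
    exact this
  have h1 := hg ⟨α (d x), by simp [hα', hdx]⟩
  change (g (α (d x)) + r • fb _ : A) = r • f x
  rw [← hfb x hdx]
  simp only [] at h1
  rw [h1, ← smul_add, LinearMap.comp_apply, ← map_add]
  congr 2
  ext
  change β (α (d x)) + (d x - β (α (d x))) = d x
  abel

lemma isGVIdeal_top : IsGVIdeal R (⊤ : Ideal R) := by
  refine ⟨⟨{1}, by simp⟩, ?_, ?_⟩
  · intro a b h
    have := LinearMap.congr_fun h ⟨1, trivial⟩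
    simpa using this
  · intro f
    refine ⟨f ⟨1, trivial⟩, ?_⟩
    ext x
    have : x = (x : R) • (⟨1, trivial⟩ : (⊤ : Ideal R)) := by ext; simp
    conv_rhs => rw [this, map_smul]
    simp [mul_comm]

lemma IsGVIdeal.eq_of_smul {J : Ideal R} (hJ : IsGVIdeal R J) {a b : R}
    (h : ∀ j ∈ J, a * j = b * j) : a = b := by
  apply hJ.2.1
  ext x
  simpa using h x x.2

lemma IsGVIdeal.exists_of_hom {J : Ideal R} (hJ : IsGVIdeal R J) (f : J →ₗ[R] R) :
    ∃ r : R, ∀ (j : R) (hj : j ∈ J), f ⟨j, hj⟩ = r * j := by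
  obtain ⟨r, hr⟩ := hJ.2.2 f
  refine ⟨r, fun j hj => ?_⟩
  rw [← hr]
  simp

lemma IsGVIdeal.mul {J₁ J₂ : Ideal R} (h₁ : IsGVIdeal R J₁) (h₂ : IsGVIdeal R J₂) :
    IsGVIdeal R (J₁ * J₂) := by
  refine ⟨h₁.1.mul h₂.1, ?_, ?_⟩
  · intro a b h
    apply h₁.eq_of_smul
    intro j hj
    apply h₂.eq_of_smul
    intro k hk
    have := LinearMap.congr_fun h ⟨j * k, Ideal.mul_mem_mul hj hk⟩
    simpa [mul_assoc] using this
  · intro f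
    have key : ∀ a : J₁, ∃ r : R, ∀ (k : R) (hk : k ∈ J₂),
        f ⟨a * k, Ideal.mul_mem_mul a.2 hk⟩ = r * k := by
      intro a
      let g : J₂ →ₗ[R] R :=
        { toFun := fun k => f ⟨a * k, Ideal.mul_mem_mul a.2 k.2⟩
          map_add' := by
            intro x y
            rw [← map_add]
            congr 1
            ext
            simp [mul_add]
          map_smul' := by
            intro c x
            rw [← map_smul]
            congr 1
            ext
            simp [mul_left_comm] }
      exact h₂.exists_of_hom g
    choose φ hφ using key
    let g : J₁ →ₗ[R] R :=
      { toFun := φ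
        map_add' := by
          intro x y
          apply h₂.eq_of_smul
          intro k hk
          rw [add_mul, ← hφ _ k hk, ← hφ _ k hk, ← hφ _ k hk, ← map_add]
          congr 1
          ext
          simp [add_mul]
        map_smul' := by
          intro c x
          apply h₂.eq_of_smul
          intro k hk
          rw [RingHom.id_apply, smul_eq_mul, mul_assoc, ← hφ _ k hk, ← hφ _ k hk]
          have h4 := f.map_smul c ⟨x * k, Ideal.mul_mem_mul x.2 hk⟩
          rw [smul_eq_mul] at h4
          rw [← h4]
          congr 1
          ext
          simp [mul_assoc] }
    obtain ⟨r, hr⟩ := h₁.exists_of_hom g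
    refine ⟨r, ?_⟩
    ext ⟨x, hx⟩
    change r * x = f ⟨x, hx⟩
    induction hx using Submodule.mul_induction_on' with
    | mem_mul_mem m hm n hn =>
      have h3 : φ ⟨m, hm⟩ = r * m := hr m hm
      rw [hφ ⟨m, hm⟩ n hn, h3, mul_assoc]
    | add x hx y hy h h' =>
      rw [mul_add, h, h', ← map_add]
      rfl

/-- An ideal containing no GV-ideal lies in a prime maximal `w`-ideal. -/
lemma exists_maximalWIdeal (I : Ideal R) (hI : ∀ J : Ideal R, IsGVIdeal R J → ¬ J ≤ I) :
    ∃ p : Ideal R, p.IsPrime ∧ IsMaximalWIdeal R p ∧ I ≤ p := by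
  obtain ⟨p, hIp, hp⟩ := zorn_le_nonempty₀ {Q : Ideal R | ∀ J : Ideal R, IsGVIdeal R J → ¬ J ≤ Q}
    (by
      intro c hc hchain y hy
      refine ⟨sSup c, ?_, fun z hz => le_sSup hz⟩
      intro J hJ hle
      obtain ⟨s, hs⟩ := hJ.1
      have hsub : ∀ x ∈ s, ∃ Q ∈ c, x ∈ Q := by
        intro x hx
        have : x ∈ sSup c := hle (hs ▸ Submodule.subset_span hx)
        exact (Submodule.mem_sSup_of_directed ⟨y, hy⟩ hchain.directedOn).1 this
      have : ∃ Q ∈ c, (s : Set R) ⊆ Q := by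
        have hfin := DirectedOn.exists_mem_subset_of_finset_subset_biUnion (α := R) (ι := Ideal R)
          (f := fun Q => (Q : Set R)) (c := c) ⟨y, hy⟩ hchain.directedOn (s := s)
          (by
            intro x hx
            obtain ⟨Q, hQ, hxQ⟩ := hsub x hx
            exact Set.mem_biUnion hQ hxQ)
        exact hfin
      obtain ⟨Q, hQ, hsQ⟩ := this
      refine hc hQ J hJ ?_
      rw [← hs]
      exact Submodule.span_le.2 hsQ) I hI
  have hpm : ∀ J : Ideal R, IsGVIdeal R J → ¬ J ≤ p := hp.1
  have hbig : ∀ x ∉ p, ∃ J, IsGVIdeal R J ∧ J ≤ p ⊔ Ideal.span {x} := by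
    intro x hx
    by_contra! hcon
    have := hp.2 (y := p ⊔ Ideal.span {x}) hcon le_sup_left
    exact hx (this (Ideal.mem_sup_right (Ideal.subset_span rfl)))
  have hne : p ≠ ⊤ := by
    rintro rfl
    exact hpm ⊤ isGVIdeal_top le_rfl
  refine ⟨p, ⟨hne, ?_⟩, ⟨?_, hne, ?_⟩, hIp⟩
  · intro a b hab
    by_contra! hcon
    obtain ⟨J₁, hJ₁, h₁⟩ := hbig a hcon.1
    obtain ⟨J₂, hJ₂, h₂⟩ := hbig b hcon.2
    refine hpm _ (hJ₁.mul hJ₂) ((Ideal.mul_mono h₁ h₂).trans ?_)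
    rw [Ideal.sup_mul, Ideal.mul_sup (Ideal.span {a}), Ideal.span_singleton_mul_span_singleton]
    refine sup_le Ideal.mul_le_left (sup_le Ideal.mul_le_right ?_)
    rw [Ideal.span_singleton_le_iff_mem]
    exact hab
  · intro x J hJ hx
    by_contra hxp
    obtain ⟨J', hJ', h'⟩ := hbig x hxp
    refine hpm _ (hJ.mul hJ') ((Ideal.mul_mono le_rfl h').trans ?_)
    rw [Ideal.mul_sup]
    refine sup_le Ideal.mul_le_right ?_
    rw [Ideal.mul_le]
    intro r hr s hs
    obtain ⟨c, rfl⟩ := Ideal.mem_span_singleton'.1 hs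
    rw [mul_left_comm]
    exact p.mul_mem_left _ (hx r hr)
  · intro q hq hqne hpq
    refine le_antisymm hpq (hp.2 (y := q) ?_ hpq)
    intro J hJ hJq
    apply hqne
    rw [Ideal.eq_top_iff_one]
    exact hq 1 J hJ fun j hj => by simpa using hJq hj

section loc
variable {S : Type u} [CommRing S] [Algebra R S]

/-- Coordinatewise base change, as an `R`-linear map. -/
def coordMap (R S : Type u) [CommRing R] [CommRing S] [Algebra R S] (n : ℕ) :
    (Fin n → R) →ₗ[R] (Fin n → S) :=
  LinearMap.compLeft (Algebra.linearMap R S) (Fin n)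

lemma coordMap_apply (n : ℕ) (v : Fin n → R) (i : Fin n) :
    coordMap R S n v i = algebraMap R S (v i) := rfl

lemma local_split [IsDomain R] (p : Ideal R) [p.IsPrime]
    (hv : ValuationRing (Localization.AtPrime p)) {m n : ℕ}
    (ρ : (Fin m → R) →ₗ[R] (Fin n → R)) :
    ∃ t ∉ p, ∃ σ : LinearMap.range ρ →ₗ[R] (Fin m → R),
      ∀ l : LinearMap.range ρ, ρ (σ l) = t • (l : Fin n → R) := by
  let S := Localization.AtPrime p
  have hinj : Function.Injective (algebraMap R S) :=
    IsLocalization.injective S p.primeCompl_le_nonZeroDivisors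
  have hdom : IsDomain S := inferInstance
  have hcinj : ∀ k, Function.Injective (coordMap R S k) := by
    intro k a b h
    funext i
    exact hinj (congrFun h i)
  let ρS : (Fin m → S) →ₗ[S] (Fin n → S) :=
    Matrix.toLin' ((LinearMap.toMatrix' ρ).map (algebraMap R S))
  have hρS : ∀ v, ρS (coordMap R S m v) = coordMap R S n (ρ v) := by
    intro v
    funext i
    have h1 := RingHom.map_mulVec (algebraMap R S) (LinearMap.toMatrix' ρ) v i
    rw [LinearMap.toMatrix'_mulVec] at h1
    rw [coordMap_apply, h1]
    simp only [ρS, Matrix.toLin'_apply]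
    rfl
  have htf : Module.IsTorsionFree S (LinearMap.range ρS) := inferInstance
  have hflat : Module.Flat S (LinearMap.range ρS) := by
    rw [Module.Flat.flat_iff_torsion_eq_bot_of_isBezout,
      ← Submodule.isTorsionFree_iff_torsion_eq_bot]
    exact htf
  have hfree : Module.Free S (LinearMap.range ρS) := Module.free_of_flat_of_isLocalRing
  obtain ⟨s, hs⟩ := Module.projective_lifting_property ρS.rangeRestrict
    (LinearMap.id : LinearMap.range ρS →ₗ[S] LinearMap.range ρS) ρS.surjective_rangeRestrict
  have hs' : ∀ y, ρS (s y) = y := fun y => congrArg Subtype.val (LinearMap.congr_fun hs y)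
  let ι : LinearMap.range ρ →ₗ[R] LinearMap.range ρS :=
    LinearMap.codRestrict ((LinearMap.range ρS).restrictScalars R)
      (coordMap R S n ∘ₗ (LinearMap.range ρ).subtype) (by
        rintro ⟨_, v, rfl⟩
        exact ⟨coordMap R S m v, hρS v⟩)
  let τ : LinearMap.range ρ →ₗ[R] (Fin m → S) := s.restrictScalars R ∘ₗ ι
  have hτ : ∀ l, ρS (τ l) = coordMap R S n l := fun l => hs' (ι l)
  obtain ⟨⟨t, ht⟩, hinteg⟩ := IsLocalization.exist_integer_multiples_of_finite p.primeCompl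
    (fun ij : Fin m × Fin m => τ (ρ.rangeRestrict (Pi.single ij.1 1)) ij.2)
  have hmem : ∀ l, (t • τ) l ∈ LinearMap.range (coordMap R S m) := by
    intro l
    obtain ⟨v, rfl⟩ := ρ.surjective_rangeRestrict l
    have hv : v = ∑ i, v i • (Pi.single i (1 : R) : Fin m → R) := by
      funext j
      simp [Finset.sum_apply, Pi.single_apply]
    rw [hv, map_sum, map_sum]
    refine Submodule.sum_mem _ fun i _ => ?_
    rw [map_smul, map_smul]
    refine Submodule.smul_mem _ _ ?_
    choose c hc using fun j => hinteg (i, j)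
    refine ⟨c, ?_⟩
    funext j
    exact hc j
  let e := LinearEquiv.ofInjective (coordMap R S m) (hcinj m)
  let σ : LinearMap.range ρ →ₗ[R] (Fin m → R) :=
    e.symm.toLinearMap ∘ₗ LinearMap.codRestrict _ (t • τ) hmem
  have hσ : ∀ l, coordMap R S m (σ l) = t • τ l := fun l =>
    congrArg Subtype.val (e.apply_symm_apply (LinearMap.codRestrict _ (t • τ) hmem l))
  refine ⟨t, ht, σ, fun l => hcinj n ?_⟩
  rw [← hρS, hσ, (coordMap R S n).map_smul, ← hτ]
  exact (ρS.restrictScalars R).map_smul t (τ l)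

end loc

/-- The ideal of scalars that factor through `ρ`. -/
def splitIdeal {m n : ℕ} (ρ : (Fin m → R) →ₗ[R] (Fin n → R)) : Ideal R where
  carrier := {t | ∃ σ : LinearMap.range ρ →ₗ[R] (Fin m → R),
      ∀ l : LinearMap.range ρ, ρ (σ l) = t • (l : Fin n → R)}
  add_mem' := by
    rintro a b ⟨σ, hσ⟩ ⟨τ, hτ⟩
    exact ⟨σ + τ, fun l => by rw [LinearMap.add_apply, map_add, hσ, hτ, add_smul]⟩
  zero_mem' := ⟨0, fun l => by simp⟩
  smul_mem' := by
    rintro c a ⟨σ, hσ⟩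
    exact ⟨c • σ, fun l => by rw [LinearMap.smul_apply, map_smul, hσ, smul_assoc]⟩

lemma absolutelyWPure_of_surjective [IsDomain R]
    (hPvMD : ∀ (p : Ideal R) [p.IsPrime], IsMaximalWIdeal R p →
      ValuationRing (Localization.AtPrime p))
    {E A : Type u} [AddCommGroup E] [Module R E] [AddCommGroup A] [Module R A]
    [hE : Module.Injective R E] (q : E →ₗ[R] A) (hq : Function.Surjective q) :
    IsAbsolutelyWPure R A := by
  intro N _ _ hN x
  obtain ⟨n, m, π, ρ, hπ, hex⟩ := Module.FinitePresentation.exists_fin' R N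
  have hker : LinearMap.ker π = LinearMap.range ρ := LinearMap.exact_iff.1 hex
  obtain ⟨J, hJ, hle⟩ : ∃ J : Ideal R, IsGVIdeal R J ∧ J ≤ splitIdeal ρ := by
    by_contra! hcon
    obtain ⟨p, hp, hpm, hle⟩ := exists_maximalWIdeal (splitIdeal ρ) hcon
    obtain ⟨t, ht, hσ⟩ := local_split p (hPvMD p hpm) ρ
    exact ht (hle hσ)
  refine ⟨J, hJ, fun r hr => ?_⟩
  obtain ⟨σ, hσ⟩ := hle hr
  refine kill_ext_one π hπ r ?_ x
  rw [hker]
  intro f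
  obtain ⟨h, hh⟩ := Module.projective_lifting_property q (f ∘ₗ ρ.rangeRestrict) hq
  obtain ⟨g, hg⟩ := hE.out (LinearMap.range ρ).subtype (Submodule.subtype_injective _) (h ∘ₗ σ)
  refine ⟨q ∘ₗ g, fun l => ?_⟩
  have h1 : g l = h (σ l) := hg l
  have h2 : q (h (σ l)) = f (ρ.rangeRestrict (σ l)) := LinearMap.congr_fun hh (σ l)
  have h3 : ρ.rangeRestrict (σ l) = r • l := Subtype.ext (hσ l)
  rw [LinearMap.comp_apply, h1, h2, h3, map_smul]

end helpers

/-- If `R` is a PvMD (i.e. `R_p` is a valuation domain for every maximal `w`-ideal `p`),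
then every `w`-FP-projective module has projective dimension at most `1`
(i.e. `Ext^2_R(M, -) = 0`). -/
theorem pd_le_one_of_wFPProjective_of_pvmd (R : Type u) [CommRing R] [IsDomain R]
    (hPvMD : ∀ (p : Ideal R) [p.IsPrime], IsMaximalWIdeal R p →
      ValuationRing (Localization.AtPrime p))
    (M : Type u) [AddCommGroup M] [Module R M] (hM : IsWFPProjective R M) :
    ∀ (N : Type u) [AddCommGroup N] [Module R N], Subsingleton (extMod R M N 2) := by
  intro N _ _
  obtain ⟨⟨E, hE, i, hi⟩⟩ := EnoughInjectives.presentation (ModuleCat.of R N)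
  have hinj : Module.Injective R E := (Module.injective_iff_injective_object R E).2 hE
  have hi' : Function.Injective i.hom := (ModuleCat.mono_iff_injective i).1 hi
  exact ext_two_of_ext_one i.hom hi'
    (hM _ (absolutelyWPure_of_surjective hPvMD (LinearMap.range i.hom).mkQ
      (Submodule.mkQ_surjective _)))
end

section
/- If M is a w-FP-projective R-module such that Ext^1_R(M,G)=0 for every GV-torsion-free R-module G, then M is projective. -/
open CategoryTheory

universe u

/-- A module is GV-torsion-free if no nonzero element is annihilated by a GV-ideal. -/
def IsGVTorsionFree (R : Type u) [CommRing R]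
    (G : Type u) [AddCommGroup G] [Module R G] : Prop :=
  ∀ x : G, (∃ J : Ideal R, IsGVIdeal R J ∧ ∀ j ∈ J, j • x = 0) → x = 0

theorem gv_iff {R : Type u} [CommRing R] (J : Ideal R) :
    IsGVIdeal R J ↔ J.FG ∧ (∀ r : R, (∀ j ∈ J, r * j = 0) → r = 0) ∧
      ∀ f : J →ₗ[R] R, ∃ c : R, ∀ j : J, f j = c * j := by
  unfold IsGVIdeal
  refine and_congr_right fun _ => ?_
  constructor
  · rintro ⟨hi, hs⟩
    refine ⟨fun r hr => hi ?_, fun f => ?_⟩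
    · ext j
      simpa using hr j j.2
    · obtain ⟨c, hc⟩ := hs f
      refine ⟨c, fun j => ?_⟩
      rw [← hc]
      simp
  · rintro ⟨hi, hs⟩
    refine ⟨fun a b hab => ?_, fun f => ?_⟩
    · have := hi (a - b) (fun j hj => by
        have := LinearMap.congr_fun hab ⟨j, hj⟩
        simp at this
        rw [sub_mul, this, sub_self])
      exact sub_eq_zero.1 this
    · obtain ⟨c, hc⟩ := hs f
      refine ⟨c, ?_⟩
      ext j
      simp [hc]

theorem gv_top (R : Type u) [CommRing R] : IsGVIdeal R (⊤ : Ideal R) := by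
  rw [gv_iff]
  refine ⟨Module.Finite.fg_top, fun r hr => by simpa using hr 1 trivial, fun f => ?_⟩
  refine ⟨f ⟨1, trivial⟩, fun j => ?_⟩
  have : j = (j : R) • (⟨1, trivial⟩ : (⊤ : Ideal R)) := by ext; simp
  conv_lhs => rw [this, map_smul]
  simp [mul_comm]

theorem gv_mul {R : Type u} [CommRing R] {I J : Ideal R} (hI : IsGVIdeal R I)
    (hJ : IsGVIdeal R J) : IsGVIdeal R (I * J) := by
  rw [gv_iff] at *
  obtain ⟨fI, iI, sI⟩ := hI
  obtain ⟨fJ, iJ, sJ⟩ := hJ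
  refine ⟨fI.mul fJ, fun r hr => ?_, fun f => ?_⟩
  · refine iI r fun i hi => iJ _ fun j hj => ?_
    rw [mul_assoc]
    exact hr _ (Ideal.mul_mem_mul hi hj)
  · have h1 : ∀ i : I, ∃ c : R, ∀ j : J, f ⟨i * j, Ideal.mul_mem_mul i.2 j.2⟩ = c * j := by
      intro i
      let g : J →ₗ[R] R :=
        { toFun := fun j => f ⟨i * j, Ideal.mul_mem_mul i.2 j.2⟩
          map_add' := fun x y => by
            rw [← map_add]; congr 1; ext; simp [mul_add]
          map_smul' := fun r x => by
            rw [← map_smul]; congr 1; ext; simp [mul_left_comm] }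
      exact sJ g
    choose s hs using h1
    let g : I →ₗ[R] R :=
      { toFun := s
        map_add' := fun x y => sub_eq_zero.1 (iJ _ fun j hj => by
          rw [sub_mul, add_mul, ← hs _ ⟨j, hj⟩, ← hs _ ⟨j, hj⟩, ← hs _ ⟨j, hj⟩, ← map_add,
            ← map_sub]
          convert map_zero f
          ext; simp [add_mul])
        map_smul' := fun r x => sub_eq_zero.1 (iJ _ fun j hj => by
          rw [sub_mul, RingHom.id_apply, smul_eq_mul, mul_assoc, ← hs _ ⟨j, hj⟩,
            ← hs _ ⟨j, hj⟩, ← smul_eq_mul (a := r), ← map_smul, ← map_sub]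
          convert map_zero f
          ext; simp [mul_assoc]) }
    obtain ⟨c, hc⟩ := sI g
    refine ⟨c, ?_⟩
    rintro ⟨x, hx⟩
    induction hx using Submodule.mul_induction_on' with
    | mem_mul_mem i hi j hj =>
      have h2 := hs ⟨i, hi⟩ ⟨j, hj⟩
      have h3 : s ⟨i, hi⟩ = c * i := hc ⟨i, hi⟩
      rw [h3] at h2
      exact h2.trans (mul_assoc _ _ _)
    | add x hx y hy h1 h2 =>
      have : f ⟨x + y, add_mem hx hy⟩ = f ⟨x, hx⟩ + f ⟨y, hy⟩ := by
        rw [← map_add]; rfl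
      rw [this, h1, h2]
      simp [mul_add]

theorem gv_fg {R : Type u} [CommRing R] {X : Type*} [AddCommGroup X] [Module R X]
    (S : Submodule R X) (hS : S.FG)
    (h : ∀ x ∈ S, ∃ J : Ideal R, IsGVIdeal R J ∧ ∀ j ∈ J, j • x = 0) :
    ∃ J : Ideal R, IsGVIdeal R J ∧ ∀ j ∈ J, ∀ x ∈ S, j • x = 0 := by
  classical
  obtain ⟨s, rfl⟩ := hS
  have key : ∀ t : Finset X, t ⊆ s →
      ∃ J : Ideal R, IsGVIdeal R J ∧ ∀ j ∈ J, ∀ x ∈ t, j • x = 0 := by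
    intro t
    induction t using Finset.induction_on with
    | empty => intro _; exact ⟨⊤, gv_top R, by simp⟩
    | insert a t _ ih =>
      intro hs
      obtain ⟨J, hJ, h1⟩ := ih (fun x hx => hs (Finset.mem_insert_of_mem hx))
      obtain ⟨I, hI, h2⟩ := h a (Submodule.subset_span (hs (Finset.mem_insert_self a t)))
      refine ⟨I * J, gv_mul hI hJ, fun j hj x hx => ?_⟩
      rcases Finset.mem_insert.1 hx with rfl | hx
      · exact h2 j (Ideal.mul_le_left (I := I) (J := J) hj)
      · exact h1 j (Ideal.mul_le_right (I := I) (J := J) hj) x hx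
  obtain ⟨J, hJ, h1⟩ := key s subset_rfl
  refine ⟨J, hJ, fun j hj x hx => ?_⟩
  induction hx using Submodule.span_induction with
  | mem x hx => exact h1 j hj x hx
  | zero => simp
  | add x y _ _ a b => rw [smul_add, a, b, add_zero]
  | smul r x _ a => rw [smul_comm, a, smul_zero]

/-- The GV-torsion submodule. -/
def gvTor (R : Type u) [CommRing R] (K : Type u) [AddCommGroup K] [Module R K] :
    Submodule R K where
  carrier := {x | ∃ J : Ideal R, IsGVIdeal R J ∧ ∀ j ∈ J, j • x = 0}
  zero_mem' := ⟨⊤, gv_top R, by simp⟩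
  add_mem' := by
    rintro x y ⟨I, hI, h1⟩ ⟨J, hJ, h2⟩
    refine ⟨I * J, gv_mul hI hJ, fun j hj => ?_⟩
    rw [smul_add, h1 j (Ideal.mul_le_left (I := I) (J := J) hj), h2 j (Ideal.mul_le_right (I := I) (J := J) hj), add_zero]
  smul_mem' := by
    rintro r x ⟨I, hI, h1⟩
    exact ⟨I, hI, fun j hj => by rw [smul_comm, h1 j hj, smul_zero]⟩

theorem gvTor_torsion (R : Type u) [CommRing R] (K : Type u) [AddCommGroup K] [Module R K] :
    IsGVTorsion R (gvTor R K) := by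
  rintro ⟨x, J, hJ, h⟩
  exact ⟨J, hJ, fun j hj => Subtype.ext (h j hj)⟩

theorem quot_torsionFree (R : Type u) [CommRing R] (K : Type u) [AddCommGroup K] [Module R K] :
    IsGVTorsionFree R (K ⧸ gvTor R K) := by
  intro x
  induction x using Submodule.Quotient.induction_on with | _ x
  rintro ⟨J, hJ, h⟩
  rw [Submodule.Quotient.mk_eq_zero]
  obtain ⟨I, hI, h2⟩ := gv_fg (Submodule.map (LinearMap.toSpanSingleton R K x) J) (Submodule.FG.map _ hJ.1) (by
    rintro _ ⟨j, hj, rfl⟩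
    have := h j hj
    rw [← Submodule.Quotient.mk_smul, Submodule.Quotient.mk_eq_zero] at this
    exact this)
  refine ⟨I * J, gv_mul hI hJ, fun j hj => ?_⟩
  induction hj using Submodule.mul_induction_on' with
  | mem_mul_mem i hi j hj =>
    rw [mul_smul]
    exact h2 i hi _ ⟨j, hj, rfl⟩
  | add a _ b _ h3 h4 => rw [add_smul, h3, h4, add_zero]

theorem ext_data (R : Type u) [CommRing R] (M : Type u) [AddCommGroup M] [Module R M] :
    ∃ (P : ModuleCat.{u} R) (p : P →ₗ[R] M), Module.Projective R P ∧ Function.Surjective p ∧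
      ∀ (A : Type u) [AddCommGroup A] [Module R A],
        (Subsingleton (extMod R M A 1) → ∀ ψ : LinearMap.ker p →ₗ[R] A,
          ∃ φ : P →ₗ[R] A, ∀ k : LinearMap.ker p, φ k = ψ k) ∧
        ∀ x : extMod R M A 1, ∃ ψ : LinearMap.ker p →ₗ[R] A, ∀ r : R,
          (∃ φ : P →ₗ[R] A, ∀ k : LinearMap.ker p, φ k = r • ψ k) → r • x = 0 := by
  let Q := projectiveResolution (ModuleCat.of R M)
  let p : Q.complex.X 0 →ₗ[R] M := (Q.π.f 0).hom
  let d : Q.complex.X 1 →ₗ[R] Q.complex.X 0 := (Q.complex.d 1 0).hom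
  let e : Q.complex.X 2 →ₗ[R] Q.complex.X 1 := (Q.complex.d 2 1).hom
  have hp : Function.Surjective p :=
    (ModuleCat.epi_iff_surjective (Q.π.f 0)).1 inferInstance
  have hdp : LinearMap.range d = LinearMap.ker p :=
    (Q.exact₀).moduleCat_range_eq_ker
  have hed : LinearMap.range e = LinearMap.ker d :=
    (Q.exact_succ 0).moduleCat_range_eq_ker
  refine ⟨Q.complex.X 0, p, (IsProjective.iff_projective _).2 (Q.projective 0), hp, ?_⟩
  intro A _ _
  let C := Q.complex.linearYonedaObj R (ModuleCat.of R A)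
  let iso : extMod R M A 1 ≅ C.homology 1 := Q.isoExt 1 (ModuleCat.of R A)
  let d' : Q.complex.X 1 →ₗ[R] LinearMap.ker p := d.codRestrict _ (fun x => by
    rw [← hdp]; exact ⟨x, rfl⟩)
  have hd' : Function.Surjective d' := by
    rintro ⟨k, hk⟩
    rw [← hdp] at hk
    obtain ⟨y, rfl⟩ := hk
    exact ⟨y, rfl⟩
  have hde : ∀ y, d' (e y) = 0 := fun y => by
    have : e y ∈ LinearMap.ker d := by rw [← hed]; exact ⟨y, rfl⟩
    exact Subtype.ext this
  constructor
  · intro hs ψ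
    have : Limits.IsZero (C.homology 1) :=
      Limits.IsZero.of_iso (ModuleCat.isZero_of_subsingleton _) iso.symm
    rw [← HomologicalComplex.exactAt_iff_isZero_homology,
      HomologicalComplex.exactAt_iff' _ 0 1 2 (by simp) (by simp),
      ShortComplex.moduleCat_exact_iff] at this
    obtain ⟨φ, hφ⟩ := this (ModuleCat.ofHom (ψ ∘ₗ d')) (by
      change Q.complex.d 2 1 ≫ ModuleCat.ofHom (ψ ∘ₗ d') = 0
      ext y
      change ψ (d' (e y)) = 0
      rw [hde, map_zero])
    change Q.complex.X 0 ⟶ ModuleCat.of R A at φ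
    change Q.complex.d 1 0 ≫ φ = ModuleCat.ofHom (ψ ∘ₗ d') at hφ
    refine ⟨φ.hom, fun k => ?_⟩
    obtain ⟨y, rfl⟩ := hd' k
    exact LinearMap.congr_fun (congrArg ModuleCat.Hom.hom hφ) y
  · intro x
    obtain ⟨z, hz⟩ := (ModuleCat.epi_iff_surjective (C.homologyπ 1)).1 inferInstance (iso.hom x)
    let f : Q.complex.X 1 →ₗ[R] A := ModuleCat.Hom.hom (C.iCycles 1 z)
    have hf : ∀ y, f (e y) = 0 := by
      intro y
      have h0 : C.iCycles 1 ≫ C.d 1 2 = 0 := C.iCycles_d 1 2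
      have h1 : C.d 1 2 (C.iCycles 1 z) = 0 := by
        rw [← ModuleCat.comp_apply, h0]; rfl
      exact LinearMap.congr_fun (congrArg ModuleCat.Hom.hom h1) y
    have hψ : ∃ ψ : LinearMap.ker p →ₗ[R] A, ∀ y, ψ (d' y) = f y := by
      have hk : LinearMap.ker d' ≤ LinearMap.ker f := by
        intro y hy
        have : y ∈ LinearMap.ker d := congrArg Subtype.val hy
        rw [← hed] at this
        obtain ⟨y, rfl⟩ := this
        exact hf y
      refine ⟨(LinearMap.ker d').liftQ f hk ∘ₗ
        (d'.quotKerEquivOfSurjective hd').symm.toLinearMap, fun y => ?_⟩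
      have : (d'.quotKerEquivOfSurjective hd').symm (d' y) = Submodule.Quotient.mk y := by
        rw [LinearEquiv.symm_apply_eq]; rfl
      simp [this]
    obtain ⟨ψ, hψ⟩ := hψ
    refine ⟨ψ, ?_⟩
    rintro r ⟨φ, hφ⟩
    obtain ⟨w, hw⟩ : ∃ w : C.X 0, ∀ y, ModuleCat.Hom.hom (C.d 0 1 w) y = φ (d y) :=
      ⟨ModuleCat.ofHom φ, fun y => rfl⟩
    have h1 : C.toCycles 0 1 w = r • z := by
      apply (ModuleCat.mono_iff_injective (C.iCycles 1)).1 inferInstance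
      rw [← ModuleCat.comp_apply, HomologicalComplex.toCycles_i, map_smul]
      apply ModuleCat.hom_ext
      apply LinearMap.ext
      intro y
      have := hφ (d' y)
      rw [hψ] at this
      exact (hw y).trans this
    have h2 : iso.hom (r • x) = 0 := by
      rw [map_smul, ← hz, ← map_smul, ← h1, ← ModuleCat.comp_apply,
        HomologicalComplex.toCycles_comp_homologyπ]
      rfl
    apply (ModuleCat.mono_iff_injective iso.hom).1 inferInstance
    rw [h2, map_zero]

theorem torsion_pure (R : Type u) [CommRing R] (A : Type u) [AddCommGroup A] [Module R A]
    (hA : IsGVTorsion R A) : IsAbsolutelyWPure R A := by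
  intro N _ _ hN x
  obtain ⟨P, p, hP, hp, H⟩ := ext_data R N
  obtain ⟨ψ, hψ⟩ := (H A).2 x
  obtain ⟨n, q, hq⟩ := Module.Finite.exists_fin' R N
  have hK : (LinearMap.ker q).FG := Module.FinitePresentation.fg_ker q hq
  obtain ⟨a, ha⟩ := Module.projective_lifting_property p q hp
  obtain ⟨b, hb⟩ := Module.projective_lifting_property q p hq
  let a' : LinearMap.ker q →ₗ[R] LinearMap.ker p := a.restrict (fun x hx => by
    rw [LinearMap.mem_ker] at *
    rw [← hx, ← ha]; rfl)
  let c : P →ₗ[R] LinearMap.ker p := (LinearMap.id - a ∘ₗ b).codRestrict _ (fun x => by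
    have h1 : p (a (b x)) = q (b x) := LinearMap.congr_fun ha _
    have h2 : q (b x) = p x := LinearMap.congr_fun hb _
    simp [h1, h2])
  have : Module.Finite R (LinearMap.ker q) := Module.Finite.iff_fg.2 hK
  obtain ⟨J, hJ, h⟩ := gv_fg (LinearMap.range (ψ ∘ₗ a')) (Module.Finite.iff_fg.1 inferInstance)
    (fun y _ => hA y)
  refine ⟨J, hJ, fun j hj => hψ j ⟨j • ψ ∘ₗ c, fun k => ?_⟩⟩
  have hbk : b k ∈ LinearMap.ker q := by
    rw [LinearMap.mem_ker]
    exact (LinearMap.congr_fun hb _).trans k.2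
  have h1 : j • ψ (a' ⟨b k, hbk⟩) = 0 := h j hj _ ⟨_, rfl⟩
  have h2 : c k = k - a' ⟨b k, hbk⟩ := by
    ext; simp [c, a']
  simp [h2, smul_sub, h1]

/-- A `w`-FP-projective module with `Ext^1` vanishing against all GV-torsion-free
modules is projective. -/
theorem projective_of_wFPProjective (R : Type u) [CommRing R]
    (M : Type u) [AddCommGroup M] [Module R M] (hM : IsWFPProjective R M)
    (hG : ∀ (G : Type u) [AddCommGroup G] [Module R G], IsGVTorsionFree R G →
      Subsingleton (extMod R M G 1)) :
    Module.Projective R M := by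
  obtain ⟨P, p, hP, hp, H⟩ := ext_data R M
  let K := LinearMap.ker p
  let T := gvTor R K
  obtain ⟨g, hg⟩ := (H (K ⧸ T)).1 (hG _ (quot_torsionFree R K)) T.mkQ
  obtain ⟨h, hh⟩ := Module.projective_lifting_property T.mkQ g T.mkQ_surjective
  let t : K →ₗ[R] T := (LinearMap.id - h ∘ₗ K.subtype).codRestrict T (fun x => by
    have h1 : T.mkQ (h x) = g x := LinearMap.congr_fun hh _
    rw [← Submodule.Quotient.mk_eq_zero, ← Submodule.mkQ_apply]
    simp only [LinearMap.sub_apply, LinearMap.id_apply, LinearMap.comp_apply,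
      Submodule.subtype_apply, map_sub]
    rw [h1, hg, sub_self])
  obtain ⟨h', hh'⟩ := (H T).1 (hM T (torsion_pure R T (gvTor_torsion R K))) t
  let r : P →ₗ[R] K := h + T.subtype ∘ₗ h'
  have hr : ∀ k : K, r k = k := fun k => by
    simp [r, hh', t]
  let s : P →ₗ[R] P := LinearMap.id - K.subtype ∘ₗ r
  have hs : LinearMap.ker p ≤ LinearMap.ker s := fun k hk => by
    have := hr ⟨k, hk⟩
    simp only at this
    rw [LinearMap.mem_ker]
    simp [s, this]
  obtain ⟨i, hi⟩ : ∃ i : M →ₗ[R] P, i ∘ₗ p = s :=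
    ⟨(LinearMap.ker p).liftQ s hs ∘ₗ (p.quotKerEquivOfSurjective hp).symm.toLinearMap, by
      ext x
      have : (p.quotKerEquivOfSurjective hp).symm (p x) = Submodule.Quotient.mk x := by
        rw [LinearEquiv.symm_apply_eq]; rfl
      simp [this]⟩
  refine Module.Projective.of_split i p ?_
  ext m
  obtain ⟨x, rfl⟩ := hp m
  have h1 : i (p x) = s x := LinearMap.congr_fun hi x
  have h2 : p (r x) = 0 := (r x).2
  simp [h1, s, h2]
end

section
/- Let R be a coherent ring. An R-module A is absolutely w-pure if and only if Ext^{n+1}_R(N,A) is GV-torsion for every finitely presented module N and every integer n ≥ 0. -/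
open CategoryTheory

universe u

/-- `R` is coherent: every finitely generated ideal is finitely presented. -/
def IsCoherentRing (R : Type u) [CommRing R] : Prop :=
  ∀ I : Ideal R, I.FG → Module.FinitePresentation R I

theorem fp_of_injective (R : Type u) [CommRing R] (hR : IsCoherentRing R) (n : ℕ) :
    ∀ (M : Type u) [AddCommGroup M] [Module R M] [Module.Finite R M]
      (f : M →ₗ[R] (Fin n → R)), Function.Injective f → Module.FinitePresentation R M := by
  induction n with
  | zero =>
    intro M _ _ _ f hf
    have : Subsingleton M := hf.subsingleton
    infer_instance
  | succ n ih =>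
    intro M _ _ _ f hf
    let l : M →ₗ[R] R := (LinearMap.proj 0).comp f
    have hI : Module.FinitePresentation R (LinearMap.range l) :=
      hR (LinearMap.range l) ((Module.Finite.iff_fg).1 inferInstance)
    have hs : Function.Surjective l.rangeRestrict := l.surjective_rangeRestrict
    have hk : (LinearMap.ker l.rangeRestrict).FG := Module.FinitePresentation.fg_ker _ hs
    have : Module.Finite R (LinearMap.ker l.rangeRestrict) := Module.Finite.iff_fg.2 hk
    have hkp : Module.FinitePresentation R (LinearMap.ker l.rangeRestrict) := by
      refine ih _ ((LinearMap.funLeft R R Fin.succ).comp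
        (f.comp (LinearMap.ker l.rangeRestrict).subtype)) ?_
      rw [injective_iff_map_eq_zero]
      intro x hx
      have hx0 : l x.1 = 0 := congrArg Subtype.val (LinearMap.mem_ker.1 x.2)
      apply Subtype.ext
      apply hf
      rw [ZeroMemClass.coe_zero, map_zero]
      funext i
      refine Fin.cases hx0 (fun j => ?_) i
      exact congrFun hx j
    exact Module.finitePresentation_of_ker _ hs

theorem IsGVTorsion.of_iso {R : Type u} [CommRing R] {M N : ModuleCat.{u} R} (e : M ≅ N)
    (h : IsGVTorsion R M) : IsGVTorsion R N := by
  intro x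
  obtain ⟨J, hJ, hx⟩ := h (e.toLinearEquiv.symm x)
  refine ⟨J, hJ, fun j hj => ?_⟩
  apply e.toLinearEquiv.symm.injective
  rw [map_smul, hx j hj, map_zero]

section

variable {C : Type*} [Category C] [Abelian C]

/-- The augmentation of a projective resolution. -/
noncomputable def resAug {K : C} (P : ProjectiveResolution K) : P.complex.X 0 ⟶ K := P.π.f 0

instance {K : C} (P : ProjectiveResolution K) : Epi (resAug P) :=
  inferInstanceAs (Epi (P.π.f 0))

theorem d_resAug {K : C} (P : ProjectiveResolution K) : P.complex.d 1 0 ≫ resAug P = 0 :=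
  P.complex_d_comp_π_f_zero

theorem augment_w {K F : C} (ι : K ⟶ F) (P : ProjectiveResolution K) :
    P.complex.d 1 0 ≫ (resAug P ≫ ι) = 0 := by
  rw [← Category.assoc, d_resAug, Limits.zero_comp]

/-- Splice a short exact sequence onto a projective resolution of the kernel. -/
noncomputable def spliceRes (S : ShortComplex C) (hS : S.ShortExact) [Projective S.X₂]
    (P : ProjectiveResolution S.X₁) : ProjectiveResolution S.X₃ where
  complex := ChainComplex.augment P.complex (resAug P ≫ S.f) (augment_w S.f P)
  projective n := by
    cases n with
    | zero => assumption
    | succ n => exact P.projective n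
  π := (ChainComplex.toSingle₀Equiv _ _).symm ⟨S.g, by
    change (resAug P ≫ S.f) ≫ S.g = 0
    rw [Category.assoc, S.zero, Limits.comp_zero]⟩
  quasiIso := ⟨fun n => by
    have := hS.mono_f
    have := hS.epi_g
    match n with
    | 0 =>
      rw [ChainComplex.quasiIsoAt₀_iff, ShortComplex.quasiIso_iff_of_zeros']
      · have hz : (resAug P ≫ S.f) ≫ S.g = 0 := by
          rw [Category.assoc, S.zero, Limits.comp_zero]
        have he : (ShortComplex.mk (resAug P ≫ S.f) S.g hz).Exact := by
          let α : ShortComplex.mk (resAug P ≫ S.f) S.g hz ⟶ S :=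
            { τ₁ := resAug P
              τ₂ := 𝟙 _
              τ₃ := 𝟙 _ }
          have : Epi α.τ₁ := inferInstanceAs (Epi (resAug P))
          have : IsIso α.τ₂ := inferInstanceAs (IsIso (𝟙 _))
          have : Mono α.τ₃ := inferInstanceAs (Mono (𝟙 _))
          exact (ShortComplex.exact_iff_of_epi_of_isIso_of_mono α).2 hS.exact
        refine (ShortComplex.exact_and_epi_g_iff_of_iso ?_).2 ⟨he, hS.epi_g⟩
        exact ShortComplex.isoMk (Iso.refl _) (Iso.refl _) (Iso.refl _)
          ((Category.id_comp _).trans (Category.comp_id _).symm)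
          (by
            refine (Category.id_comp _).trans ?_
            refine Eq.trans ?_ (Category.comp_id _).symm
            exact (ChainComplex.toSingle₀Equiv_symm_apply_f_zero
              (C := ChainComplex.augment P.complex (resAug P ≫ S.f) (augment_w S.f P))
              (X := S.X₃) S.g hz).symm)
      all_goals rfl
    | 1 =>
      rw [quasiIsoAt_iff_exactAt']
      · rw [HomologicalComplex.exactAt_iff' _ 2 1 0 (by simp) (by simp)]
        have h0 : (ShortComplex.mk _ _ (d_resAug P)).Exact := P.exact₀
        let α : ShortComplex.mk _ _ (d_resAug P) ⟶
            ShortComplex.mk _ _ (augment_w S.f P) :=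
          { τ₁ := 𝟙 _
            τ₂ := 𝟙 _
            τ₃ := S.f }
        have : Epi α.τ₁ := inferInstanceAs (Epi (𝟙 _))
        have : IsIso α.τ₂ := inferInstanceAs (IsIso (𝟙 _))
        have : Mono α.τ₃ := inferInstanceAs (Mono S.f)
        exact (ShortComplex.exact_iff_of_epi_of_isIso_of_mono α).1 h0
      · apply ChainComplex.exactAt_succ_single_obj
    | n + 2 =>
      rw [quasiIsoAt_iff_exactAt']
      · rw [HomologicalComplex.exactAt_iff' _ (n + 3) (n + 2) (n + 1) (by simp) (by simp)]
        have h := P.complex_exactAt_succ n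
        rw [HomologicalComplex.exactAt_iff' _ (n + 2) (n + 1) n (by simp) (by simp)] at h
        exact h
      · apply ChainComplex.exactAt_succ_single_obj⟩

end

theorem ext_shift (R : Type u) [CommRing R] (S : ShortComplex (ModuleCat.{u} R))
    (hS : S.ShortExact) [Projective S.X₂] (A : ModuleCat.{u} R) (n : ℕ) :
    Nonempty (((Ext R (ModuleCat.{u} R) (n + 1)).obj (Opposite.op S.X₁)).obj A ≅
      ((Ext R (ModuleCat.{u} R) (n + 2)).obj (Opposite.op S.X₃)).obj A) := by
  let P := projectiveResolution S.X₁
  refine ⟨P.isoExt (n + 1) A ≪≫ ?_ ≪≫ ((spliceRes S hS P).isoExt (n + 2) A).symm⟩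
  refine ShortComplex.homologyMapIso
    (HomologicalComplex.isoSc' _ n (n + 1) (n + 2) (by simp) (by simp) ≪≫ ?_ ≪≫
    (HomologicalComplex.isoSc' _ (n + 1) (n + 2) (n + 3) (by simp) (by simp)).symm)
  exact Iso.refl _

/-- Over a coherent ring, `A` is absolutely `w`-pure iff `Ext^{n+1}_R(N, A)` is
GV-torsion for every finitely presented `N` and every `n ≥ 0`. -/
theorem isAbsolutelyWPure_iff_ext_gvTorsion (R : Type u) [CommRing R]
    (hR : IsCoherentRing R) (A : Type u) [AddCommGroup A] [Module R A] :
    IsAbsolutelyWPure R A ↔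
      ∀ (N : Type u) [AddCommGroup N] [Module R N], Module.FinitePresentation R N →
        ∀ n : ℕ, IsGVTorsion R (extMod R N A (n + 1)) := by
  constructor
  · intro hA N _ _ hN n
    induction n generalizing N with
    | zero => exact hA N hN
    | succ n ih =>
      obtain ⟨k, K, e, hK⟩ := Module.FinitePresentation.exists_fin R N
      have : Module.Finite R K := Module.Finite.iff_fg.2 hK
      have hKp : Module.FinitePresentation R K :=
        fp_of_injective R hR k K K.subtype K.injective_subtype
      let g : (Fin k → R) →ₗ[R] N := e.symm.toLinearMap.comp K.mkQ
      have hgK : LinearMap.ker g = K := by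
        simp [g, LinearMap.ker_comp]
      have hex : Function.Exact K.subtype g := by
        rw [LinearMap.exact_iff, hgK, Submodule.range_subtype]
      let S : ShortComplex (ModuleCat.{u} R) :=
        ShortComplex.mk (ModuleCat.ofHom K.subtype) (ModuleCat.ofHom g) (by
          rw [← ModuleCat.ofHom_comp, hex.linearMap_comp_eq_zero]; rfl)
      have hS : S.ShortExact :=
        { exact := (ShortComplex.ShortExact.moduleCat_exact_iff_function_exact S).2 hex
          mono_f := (ModuleCat.mono_iff_injective _).2 K.injective_subtype
          epi_g := (ModuleCat.epi_iff_surjective _).2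
            (e.symm.surjective.comp K.mkQ_surjective) }
      have : Projective S.X₂ := ModuleCat.projective_of_free (Pi.basisFun R (Fin k))
      obtain ⟨i⟩ := ext_shift R S hS (ModuleCat.of R A) n
      exact IsGVTorsion.of_iso i (ih K hKp)
  · intro h N _ _ hN
    exact h N hN 0
end

section
/- Let R be a coherent ring. An R-module M is w-FP-projective if and only if Ext^{n+1}_R(M,A)=0 for every absolutely w-pure module A and every integer n ≥ 0. -/
open CategoryTheory

universe u

open CategoryTheory

open CategoryTheory

theorem aux_sc (R : Type u) [CommRing R] (S : ShortComplex (ModuleCat.{u} R))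
    (Φ : Ideal R → Prop) :
    (∀ x : S.homology, ∃ J, Φ J ∧ ∀ j ∈ J, j • x = 0) ↔
    (∀ f : S.X₂, S.g.hom f = 0 → ∃ J, Φ J ∧ ∀ j ∈ J, ∃ g : S.X₁, S.f.hom g = j • f) := by
  let e : S.homology ≃ₗ[R] (LinearMap.ker S.g.hom ⧸ LinearMap.range S.moduleCatToCycles) :=
    S.moduleCatHomologyIso.toLinearEquiv
  have key : ∀ (z : LinearMap.ker S.g.hom) (j : R),
      (j • (e.symm ((LinearMap.range S.moduleCatToCycles).mkQ z)) = 0 ↔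
        ∃ g : S.X₁, S.f.hom g = j • (z : S.X₂)) := by
    intro z j
    rw [← map_smul, LinearEquiv.map_eq_zero_iff, ← map_smul, Submodule.mkQ_apply,
      Submodule.Quotient.mk_eq_zero, LinearMap.mem_range]
    simp only [Subtype.ext_iff]
    rfl
  constructor
  · intro h f hf
    obtain ⟨J, hJ, h2⟩ := h (e.symm ((LinearMap.range S.moduleCatToCycles).mkQ ⟨f, hf⟩))
    exact ⟨J, hJ, fun j hj => (key ⟨f, hf⟩ j).1 (h2 j hj)⟩
  · intro h x
    obtain ⟨y, rfl⟩ := e.symm.surjective x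
    obtain ⟨z, rfl⟩ := Submodule.mkQ_surjective _ y
    obtain ⟨J, hJ, h2⟩ := h z z.2
    exact ⟨J, hJ, fun j hj => (key z j).2 (h2 j hj)⟩

theorem aux_iso (R : Type u) [CommRing R] {X Y : ModuleCat.{u} R} (e : X ≅ Y)
    (Φ : Ideal R → Prop) :
    (∀ x : X, ∃ J, Φ J ∧ ∀ j ∈ J, j • x = 0) ↔ (∀ x : Y, ∃ J, Φ J ∧ ∀ j ∈ J, j • x = 0) := by
  have key : ∀ {X Y : ModuleCat.{u} R} (_ : X ≅ Y),
      (∀ x : X, ∃ J, Φ J ∧ ∀ j ∈ J, j • x = 0) → (∀ x : Y, ∃ J, Φ J ∧ ∀ j ∈ J, j • x = 0) := by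
    intro X Y e h y
    let l := e.toLinearEquiv
    obtain ⟨x, rfl⟩ := l.surjective y
    obtain ⟨J, hJ, h2⟩ := h x
    exact ⟨J, hJ, fun j hj => by rw [← map_smul, h2 j hj, map_zero]⟩
  exact ⟨key e, key e.symm⟩

theorem aux_ext (R : Type u) [CommRing R] (M A : Type u) [AddCommGroup M] [Module R M]
    [AddCommGroup A] [Module R A] (P : ProjectiveResolution (ModuleCat.of R M)) (n : ℕ)
    (Φ : Ideal R → Prop) :
    (∀ x : extMod R M A (n + 1), ∃ J, Φ J ∧ ∀ j ∈ J, j • x = 0) ↔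
    (∀ f : P.complex.X (n + 1) →ₗ[R] A, f ∘ₗ (P.complex.d (n + 2) (n + 1)).hom = 0 →
      ∃ J, Φ J ∧ ∀ j ∈ J, ∃ g : P.complex.X n →ₗ[R] A,
        g ∘ₗ (P.complex.d (n + 1) n).hom = j • f) := by
  let K := P.complex.linearYonedaObj R (ModuleCat.of R A)
  let e : extMod R M A (n + 1) ≅ (K.sc' n (n + 1) (n + 2)).homology :=
    P.isoExt (R := R) (n + 1) (ModuleCat.of R A) ≪≫
      ShortComplex.homologyMapIso (K.isoSc' n (n + 1) (n + 2) (by simp) (by simp))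
  rw [aux_iso R e Φ, aux_sc]
  constructor
  · intro h f hf
    obtain ⟨J, hJ, h2⟩ := h (ModuleCat.ofHom f) (ModuleCat.hom_ext hf)
    refine ⟨J, hJ, fun j hj => ?_⟩
    obtain ⟨g, hg⟩ := h2 j hj
    exact ⟨ModuleCat.Hom.hom (show P.complex.X n ⟶ ModuleCat.of R A from g),
      congrArg ModuleCat.Hom.hom hg⟩
  · intro h f hf
    obtain ⟨J, hJ, h2⟩ := h (ModuleCat.Hom.hom (show P.complex.X (n+1) ⟶ ModuleCat.of R A from f))
      (congrArg ModuleCat.Hom.hom hf)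
    refine ⟨J, hJ, fun j hj => ?_⟩
    obtain ⟨g, hg⟩ := h2 j hj
    exact ⟨ModuleCat.ofHom g, ModuleCat.hom_ext hg⟩

theorem aux_coh (R : Type u) [CommRing R] (hR : IsCoherentRing R) (n : ℕ) :
    ∀ (K : Type u) [AddCommGroup K] [Module R K] [Module.Finite R K]
      (f : K →ₗ[R] (Fin n → R)), Function.Injective f → Module.FinitePresentation R K := by
  induction n with
  | zero =>
    intro K _ _ _ f hf
    have : Subsingleton K := hf.subsingleton
    infer_instance
  | succ n ih =>
    intro K _ _ _ f hf
    let p : K →ₗ[R] R := LinearMap.proj 0 ∘ₗ f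
    have hI : (LinearMap.range p).FG := by
      rw [← Module.Finite.iff_fg]; infer_instance
    have : Module.FinitePresentation R (LinearMap.range p) := hR _ hI
    have hk := Module.FinitePresentation.fg_ker p.rangeRestrict p.surjective_rangeRestrict
    have : Module.Finite R (LinearMap.ker p.rangeRestrict) := Module.Finite.iff_fg.2 hk
    have : Module.FinitePresentation R (LinearMap.ker p.rangeRestrict) := by
      refine ih _ (LinearMap.funLeft R R Fin.succ ∘ₗ f ∘ₗ Submodule.subtype _) ?_
      rw [← LinearMap.ker_eq_bot, LinearMap.ker_eq_bot']
      rintro ⟨x, hx⟩ h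
      ext1
      apply hf
      have hx' : f x 0 = 0 := by
        simpa [p, LinearMap.mem_ker, Subtype.ext_iff] using hx
      simp only [ZeroMemClass.coe_zero, map_zero]
      funext i
      refine Fin.cases hx' (fun i => ?_) i
      exact congrFun h i
    exact Module.finitePresentation_of_ker p.rangeRestrict p.surjective_rangeRestrict

theorem aux_inj (R : Type u) [CommRing R] (A : Type u) [AddCommGroup A] [Module R A] :
    ∃ (E : Type u) (_ : AddCommGroup E) (_ : Module R E) (i : A →ₗ[R] E),
      Function.Injective i ∧ ∀ (X Y : Type u) [AddCommGroup X] [Module R X] [AddCommGroup Y]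
        [Module R Y] (m : X →ₗ[R] Y) (f : X →ₗ[R] E), LinearMap.ker m ≤ LinearMap.ker f →
        ∃ g : Y →ₗ[R] E, g ∘ₗ m = f := by
  refine ⟨(Injective.under (ModuleCat.of R A) : ModuleCat.{u} R), inferInstance, inferInstance,
    (Injective.ι (ModuleCat.of R A)).hom, (ModuleCat.mono_iff_injective _).1 inferInstance, ?_⟩
  intro X Y _ _ _ _ m f h
  have hinj : Injective (ModuleCat.of R (Injective.under (ModuleCat.of R A) : ModuleCat.{u} R)) :=
    Injective.injective_under (ModuleCat.of R A)
  let m' : (X ⧸ LinearMap.ker m) →ₗ[R] Y := (LinearMap.ker m).liftQ m le_rfl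
  let f' := (LinearMap.ker m).liftQ f h
  have hm : Function.Injective m' := by
    rw [← LinearMap.ker_eq_bot]
    exact Submodule.ker_liftQ_eq_bot _ _ _ le_rfl
  have : Mono (ModuleCat.ofHom m') := (ModuleCat.mono_iff_injective _).2 hm
  refine ⟨(Injective.factorThru (ModuleCat.ofHom f') (ModuleCat.ofHom m')).hom, ?_⟩
  have h2 := congrArg ModuleCat.Hom.hom
    (Injective.comp_factorThru (ModuleCat.ofHom f') (ModuleCat.ofHom m'))
  ext x
  exact LinearMap.congr_fun h2 ((LinearMap.ker m).mkQ x)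

def KerExt (R : Type u) [CommRing R] {F N : Type u} [AddCommGroup F] [Module R F]
    [AddCommGroup N] [Module R N] (p : F →ₗ[R] N) (A : Type u) [AddCommGroup A] [Module R A] :
    Prop :=
  ∀ f : LinearMap.ker p →ₗ[R] A, ∃ J, IsGVIdeal R J ∧ ∀ j ∈ J, ∃ g : F →ₗ[R] A,
    ∀ x : LinearMap.ker p, g x = j • f x

theorem KerExt.transfer (R : Type u) [CommRing R] {F F' N : Type u} [AddCommGroup F] [Module R F]
    [AddCommGroup F'] [Module R F'] [Module.Projective R F] [Module.Projective R F']
    [AddCommGroup N] [Module R N] (p : F →ₗ[R] N) (p' : F' →ₗ[R] N)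
    (hp : Function.Surjective p) (hp' : Function.Surjective p')
    (A : Type u) [AddCommGroup A] [Module R A] (h : KerExt R p A) : KerExt R p' A := by
  intro f'
  obtain ⟨φ, hφ⟩ := Module.projective_lifting_property p' p hp'
  obtain ⟨ψ, hψ⟩ := Module.projective_lifting_property p p' hp
  have hφ' : ∀ x, p' (φ x) = p x := fun x => LinearMap.congr_fun hφ x
  have hψ' : ∀ x, p (ψ x) = p' x := fun x => LinearMap.congr_fun hψ x
  let φK : LinearMap.ker p →ₗ[R] LinearMap.ker p' :=
    (φ ∘ₗ Submodule.subtype _).codRestrict _ (fun x => by simp [hφ'])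
  let δ : F' →ₗ[R] LinearMap.ker p' :=
    (φ ∘ₗ ψ - LinearMap.id).codRestrict _ (fun x => by simp [hφ', hψ'])
  obtain ⟨J, hJ, h2⟩ := h (f' ∘ₗ φK)
  refine ⟨J, hJ, fun j hj => ?_⟩
  obtain ⟨g, hg⟩ := h2 j hj
  refine ⟨g ∘ₗ ψ - j • (f' ∘ₗ δ), fun x => ?_⟩
  have hx : ψ x ∈ LinearMap.ker p := by
    rw [LinearMap.mem_ker, hψ']; exact x.2
  have h3 := hg ⟨ψ x, hx⟩
  have h4 : φK ⟨ψ x, hx⟩ = δ x + x := by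
    ext
    change φ (ψ x) = (φ (ψ x) - x) + x
    abel
  simp only [LinearMap.comp_apply, h4, map_add] at h3
  simp only [LinearMap.sub_apply, LinearMap.comp_apply, LinearMap.smul_apply, h3, smul_add]
  abel

theorem gv_iff_s12 (R : Type u) [CommRing R] {F N : Type u} [AddCommGroup F] [Module R F]
    [AddCommGroup N] [Module R N] [Module.Projective R F] (p : F →ₗ[R] N)
    (hp : Function.Surjective p) (A : Type u) [AddCommGroup A] [Module R A] :
    IsGVTorsion R (extMod R N A 1) ↔ KerExt R p A := by
  obtain ⟨P⟩ : Nonempty (ProjectiveResolution (ModuleCat.of R N)) :=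
    HasProjectiveResolution.out
  let ε : P.complex.X 0 →ₗ[R] N := (P.π.f 0).hom
  have hε : Function.Surjective ε := (ModuleCat.epi_iff_surjective (P.π.f 0)).1 inferInstance
  have : Module.Projective R (P.complex.X 0) :=
    (IsProjective.iff_projective _).2 (P.projective 0)
  have e0 : LinearMap.range (P.complex.d 1 0).hom = LinearMap.ker ε :=
    P.exact₀.moduleCat_range_eq_ker
  have e1 : LinearMap.range (P.complex.d 2 1).hom = LinearMap.ker (P.complex.d 1 0).hom :=
    (P.exact_succ 0).moduleCat_range_eq_ker
  have main : IsGVTorsion R (extMod R N A 1) ↔ KerExt R ε A := by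
    refine (aux_ext R N A P 0 (IsGVIdeal R)).trans ?_
    constructor
    · intro h f
      let dK : P.complex.X 1 →ₗ[R] LinearMap.ker ε :=
        (P.complex.d 1 0).hom.codRestrict _ (fun x => by rw [← e0]; exact ⟨x, rfl⟩)
      obtain ⟨J, hJ, h2⟩ := h (f ∘ₗ dK) (by
        ext x
        have : dK ((P.complex.d 2 1).hom x) = 0 := by
          ext
          have : (P.complex.d 2 1).hom x ∈ LinearMap.ker (P.complex.d 1 0).hom := by
            rw [← e1]; exact ⟨x, rfl⟩
          exact this
        change f (dK ((P.complex.d 2 1).hom x)) = 0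
        rw [this, map_zero])
      refine ⟨J, hJ, fun j hj => ?_⟩
      obtain ⟨g, hg⟩ := h2 j hj
      refine ⟨g, ?_⟩
      rintro ⟨x, hx⟩
      have hx' := hx
      rw [← e0] at hx'
      obtain ⟨y, rfl⟩ := hx'
      exact LinearMap.congr_fun hg y
    · intro h f hf
      let d1 : P.complex.X 1 →ₗ[R] P.complex.X 0 := (P.complex.d 1 0).hom
      have hk : LinearMap.ker d1 ≤ LinearMap.ker f := by
        rw [show LinearMap.ker d1 = _ from e1.symm]
        rintro _ ⟨x, rfl⟩
        exact LinearMap.congr_fun hf x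
      let fr : LinearMap.ker ε →ₗ[R] A :=
        ((LinearMap.ker d1).liftQ f hk ∘ₗ d1.quotKerEquivRange.symm.toLinearMap) ∘ₗ
          (LinearEquiv.ofEq _ _ e0.symm).toLinearMap
      obtain ⟨J, hJ, h2⟩ := h fr
      refine ⟨J, hJ, fun j hj => ?_⟩
      obtain ⟨g, hg⟩ := h2 j hj
      refine ⟨g, ?_⟩
      ext y
      have hy : d1 y ∈ LinearMap.ker ε := by rw [← e0]; exact ⟨y, rfl⟩
      refine (hg ⟨d1 y, hy⟩).trans ?_
      have : d1.quotKerEquivRange.symm ⟨d1 y, ⟨y, rfl⟩⟩ = (LinearMap.ker d1).mkQ y :=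
        d1.quotKerEquivRange_symm_apply_image y _
      change j • ((LinearMap.ker d1).liftQ f hk (d1.quotKerEquivRange.symm ⟨d1 y, ⟨y, rfl⟩⟩))
        = j • f y
      rw [this]
      rfl
  rw [main]
  exact ⟨fun h => h.transfer R ε p hε hp A, fun h => h.transfer R p ε hp hε A⟩

theorem coker_wpure (R : Type u) [CommRing R] (hR : IsCoherentRing R)
    (A E : Type u) [AddCommGroup A] [Module R A] [AddCommGroup E] [Module R E]
    (i : A →ₗ[R] E) (hi : Function.Injective i)
    (hE : ∀ (X Y : Type u) [AddCommGroup X] [Module R X] [AddCommGroup Y]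
        [Module R Y] (m : X →ₗ[R] Y) (f : X →ₗ[R] E), LinearMap.ker m ≤ LinearMap.ker f →
        ∃ g : Y →ₗ[R] E, g ∘ₗ m = f)
    (hA : IsAbsolutelyWPure R A) : IsAbsolutelyWPure R (E ⧸ LinearMap.range i) := by
  intro N _ _ hN
  obtain ⟨n, _, p, _, hp, -⟩ := Module.FinitePresentation.exists_fin' R N
  rw [gv_iff_s12 R p hp]
  have hK : Module.Finite R (LinearMap.ker p) :=
    Module.Finite.iff_fg.2 (Module.FinitePresentation.fg_ker p hp)
  have hKfp : Module.FinitePresentation R (LinearMap.ker p) :=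
    aux_coh R hR n _ (Submodule.subtype _) (Submodule.subtype_injective _)
  obtain ⟨m, _, q, _, hq, -⟩ := Module.FinitePresentation.exists_fin' R (LinearMap.ker p)
  have hQ := (gv_iff_s12 R q hq A).1 (hA _ hKfp)
  intro f
  let π := (LinearMap.range i).mkQ
  obtain ⟨g, hg⟩ := Module.projective_lifting_property π (f ∘ₗ q) (Submodule.mkQ_surjective _)
  have hgr : ∀ x : LinearMap.ker q, g x ∈ LinearMap.range i := by
    intro x
    have h1 : π (g x) = f (q x) := LinearMap.congr_fun hg x
    rw [show q x = 0 from x.2, map_zero] at h1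
    exact (Submodule.Quotient.mk_eq_zero _).1 h1
  let ei := LinearEquiv.ofInjective i hi
  let h : LinearMap.ker q →ₗ[R] A :=
    ei.symm.toLinearMap ∘ₗ (g ∘ₗ Submodule.subtype _).codRestrict _ hgr
  have hh : ∀ x, i (h x) = g x := by
    intro x
    exact congrArg Subtype.val (ei.apply_symm_apply ⟨g x, hgr x⟩)
  obtain ⟨J, hJ, h2⟩ := hQ h
  refine ⟨J, hJ, fun j hj => ?_⟩
  obtain ⟨h', hh'⟩ := h2 j hj
  let k : (Fin m → R) →ₗ[R] E := j • g - i ∘ₗ h'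
  obtain ⟨k', hk'⟩ := hE _ _ ((LinearMap.ker p).subtype ∘ₗ q) k (by
    intro x hx
    have hx' : x ∈ LinearMap.ker q := by
      rw [LinearMap.mem_ker]
      ext1
      exact hx
    have := hh' ⟨x, hx'⟩
    have h4 := hh ⟨x, hx'⟩
    simp only at this h4
    simp [k, this, h4])
  refine ⟨π ∘ₗ k', fun x => ?_⟩
  obtain ⟨y, rfl⟩ := hq x
  have h5 : k' (q y) = j • g y - i (h' y) := LinearMap.congr_fun hk' y
  have h6 : π (g y) = f (q y) := LinearMap.congr_fun hg y
  have h7 : π (i (h' y)) = 0 := (Submodule.Quotient.mk_eq_zero _).2 ⟨_, rfl⟩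
  rw [LinearMap.comp_apply, h5, map_sub, map_smul, h6, h7, sub_zero]

theorem subsing_iff (R : Type u) [CommRing R] (M A : Type u) [AddCommGroup M] [Module R M]
    [AddCommGroup A] [Module R A] (P : ProjectiveResolution (ModuleCat.of R M)) (n : ℕ) :
    Subsingleton (extMod R M A (n + 1)) ↔
    (∀ f : P.complex.X (n + 1) →ₗ[R] A, f ∘ₗ (P.complex.d (n + 2) (n + 1)).hom = 0 →
      ∃ g : P.complex.X n →ₗ[R] A, g ∘ₗ (P.complex.d (n + 1) n).hom = f) := by
  have h := aux_ext R M A P n (fun J => J = ⊤)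
  constructor
  · intro hs f hf
    obtain ⟨J, rfl, h2⟩ := h.1 (fun x => ⟨⊤, rfl, fun j _ => Subsingleton.elim _ _⟩) f hf
    simpa using h2 1 trivial
  · intro hs
    have h1 := h.2 (fun f hf => ⟨⊤, rfl, fun j _ => by
      obtain ⟨g, hg⟩ := hs f hf
      exact ⟨j • g, by rw [LinearMap.smul_comp, hg]⟩⟩)
    refine subsingleton_of_forall_eq 0 fun x => ?_
    obtain ⟨J, rfl, h2⟩ := h1 x
    simpa using h2 1 trivial

theorem dim_shift (R : Type u) [CommRing R]
    (A E : Type u) [AddCommGroup A] [Module R A] [AddCommGroup E] [Module R E]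
    (i : A →ₗ[R] E) (hi : Function.Injective i)
    (hE : ∀ (X Y : Type u) [AddCommGroup X] [Module R X] [AddCommGroup Y]
        [Module R Y] (m : X →ₗ[R] Y) (f : X →ₗ[R] E), LinearMap.ker m ≤ LinearMap.ker f →
        ∃ g : Y →ₗ[R] E, g ∘ₗ m = f)
    (M : Type u) [AddCommGroup M] [Module R M] (n : ℕ)
    (h : Subsingleton (extMod R M (E ⧸ LinearMap.range i) (n + 1))) :
    Subsingleton (extMod R M A (n + 1 + 1)) := by
  obtain ⟨P⟩ : Nonempty (ProjectiveResolution (ModuleCat.of R M)) :=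
    HasProjectiveResolution.out
  rw [subsing_iff R M _ P] at h ⊢
  intro f hf
  have : Module.Projective R (P.complex.X n) :=
    (IsProjective.iff_projective _).2 (P.projective n)
  have e1 : LinearMap.range (P.complex.d (n + 3) (n + 2)).hom =
      LinearMap.ker (P.complex.d (n + 2) (n + 1)).hom :=
    (P.exact_succ (n + 1)).moduleCat_range_eq_ker
  have e2 : LinearMap.range (P.complex.d (n + 2) (n + 1)).hom =
      LinearMap.ker (P.complex.d (n + 1) n).hom :=
    (P.exact_succ n).moduleCat_range_eq_ker
  let π := (LinearMap.range i).mkQ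
  obtain ⟨g, hg⟩ := hE _ _ (P.complex.d (n + 2) (n + 1)).hom (i ∘ₗ f) (by
    rw [← e1]
    rintro _ ⟨x, rfl⟩
    have : f ((P.complex.d (n + 3) (n + 2)).hom x) = 0 := LinearMap.congr_fun hf x
    simp [this])
  have hg' : ∀ x, g ((P.complex.d (n + 2) (n + 1)).hom x) = i (f x) :=
    fun x => LinearMap.congr_fun hg x
  obtain ⟨s, hs⟩ := h (π ∘ₗ g) (by
    ext x
    change π (g ((P.complex.d (n + 2) (n + 1)).hom x)) = 0
    rw [hg']
    exact (Submodule.Quotient.mk_eq_zero _).2 ⟨_, rfl⟩)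
  obtain ⟨t, ht⟩ := Module.projective_lifting_property π s (Submodule.mkQ_surjective _)
  have hr : ∀ x, (g - t ∘ₗ (P.complex.d (n + 1) n).hom) x ∈ LinearMap.range i := by
    intro x
    rw [← Submodule.Quotient.mk_eq_zero]
    change π (g x - t ((P.complex.d (n + 1) n).hom x)) = 0
    have h1 : π (t ((P.complex.d (n + 1) n).hom x)) = s ((P.complex.d (n + 1) n).hom x) :=
      LinearMap.congr_fun ht _
    have h2 : s ((P.complex.d (n + 1) n).hom x) = π (g x) := LinearMap.congr_fun hs x
    rw [map_sub, h1, h2, sub_self]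
  let ei := LinearEquiv.ofInjective i hi
  refine ⟨ei.symm.toLinearMap ∘ₗ
    (g - t ∘ₗ (P.complex.d (n + 1) n).hom).codRestrict _ hr, ?_⟩
  ext x
  apply hi
  refine (congrArg Subtype.val (ei.apply_symm_apply
    ⟨_, hr ((P.complex.d (n + 2) (n + 1)).hom x)⟩)).trans ?_
  have h3 : (P.complex.d (n + 1) n).hom ((P.complex.d (n + 2) (n + 1)).hom x) = 0 := by
    rw [← LinearMap.mem_ker, ← e2]; exact ⟨x, rfl⟩
  change g ((P.complex.d (n + 2) (n + 1)).hom x) -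
    t ((P.complex.d (n + 1) n).hom ((P.complex.d (n + 2) (n + 1)).hom x)) = i (f x)
  rw [h3, map_zero, sub_zero, hg']

/-- Over a coherent ring, `M` is `w`-FP-projective iff `Ext^{n+1}_R(M, A) = 0` for
every absolutely `w`-pure module `A` and every `n ≥ 0`. -/
theorem isWFPProjective_iff_ext_vanishing (R : Type u) [CommRing R]
    (hR : IsCoherentRing R) (M : Type u) [AddCommGroup M] [Module R M] :
    IsWFPProjective R M ↔
      ∀ (A : Type u) [AddCommGroup A] [Module R A], IsAbsolutelyWPure R A →
        ∀ n : ℕ, Subsingleton (extMod R M A (n + 1)) := by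
  constructor
  · intro h A _ _ hA n
    induction n generalizing A with
    | zero => exact h A hA
    | succ n ih =>
      obtain ⟨E, _, _, i, hi, hE⟩ := aux_inj R A
      exact dim_shift R A E i hi hE M n (ih _ (coker_wpure R hR A E i hi hE hA))
  · intro h A _ _ hA
    exact h A hA 0
end

section
/- Let R be a coherent ring and 0 → M'' → M' → M → 0 exact with M w-FP-projective. Then M' is w-FP-projective if and only if M'' is w-FP-projective. -/
open CategoryTheory

universe u

namespace WFPAux

lemma fac_surj {R : Type u} [CommRing R] {X Y Z W : Type u}
    [AddCommGroup X] [Module R X] [AddCommGroup Y] [Module R Y]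
    [AddCommGroup Z] [Module R Z] [AddCommGroup W] [Module R W]
    (f : X →ₗ[R] Y) (g : Y →ₗ[R] Z) (hg : Function.Surjective g) (hfg : Function.Exact f g)
    (h : Y →ₗ[R] W) (hh : ∀ x, h (f x) = 0) : ∃ k : Z →ₗ[R] W, ∀ y, k (g y) = h y := by
  have hle : LinearMap.ker g ≤ LinearMap.ker h := by
    intro y hy
    obtain ⟨x, rfl⟩ := (hfg y).1 (LinearMap.mem_ker.1 hy)
    exact hh x
  refine ⟨(Submodule.liftQ _ h hle).comp (g.quotKerEquivOfSurjective hg).symm.toLinearMap, ?_⟩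
  intro y
  have : (g.quotKerEquivOfSurjective hg).symm (g y) = Submodule.Quotient.mk y := by
    rw [LinearEquiv.symm_apply_eq]
    rfl
  simp [this]

lemma fac_inj {R : Type u} [CommRing R] {X Y Z W : Type u}
    [AddCommGroup X] [Module R X] [AddCommGroup Y] [Module R Y]
    [AddCommGroup Z] [Module R Z] [AddCommGroup W] [Module R W]
    (f : X →ₗ[R] Y) (g : Y →ₗ[R] Z) (hf : Function.Injective f) (hfg : Function.Exact f g)
    (h : W →ₗ[R] Y) (hh : ∀ x, g (h x) = 0) : ∃ k : W →ₗ[R] X, ∀ y, f (k y) = h y := by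
  refine ⟨(LinearEquiv.ofInjective f hf).symm.toLinearMap.comp
    (h.codRestrict (LinearMap.range f) (fun w => (hfg _).1 (hh w))), ?_⟩
  intro y
  have := LinearEquiv.apply_symm_apply (LinearEquiv.ofInjective f hf)
    (h.codRestrict (LinearMap.range f) (fun w => (hfg _).1 (hh w)) y)
  exact congrArg Subtype.val this

lemma coherent_sub {R : Type u} [CommRing R] (hR : IsCoherentRing R) (n : ℕ) :
    ∀ (K : Type u) [AddCommGroup K] [Module R K] [Module.Finite R K]
      (f : K →ₗ[R] (Fin n → R)), Function.Injective f → Module.FinitePresentation R K := by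
  induction n with
  | zero =>
    intro K _ _ _ f hf
    have : Subsingleton K := hf.subsingleton
    exact Module.finitePresentation_of_projective _ _
  | succ n ih =>
    intro K _ _ _ f hf
    let a : K →ₗ[R] R := (LinearMap.proj 0).comp f
    have hfg : (LinearMap.range a).FG := Module.Finite.iff_fg.1 (Module.Finite.range a)
    have : Module.FinitePresentation R (LinearMap.range a) := hR _ hfg
    have hs := a.surjective_rangeRestrict
    have hk := Module.FinitePresentation.fg_ker a.rangeRestrict hs
    have : Module.Finite R (LinearMap.ker a.rangeRestrict) := Module.Finite.iff_fg.2 hk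
    have : Module.FinitePresentation R (LinearMap.ker a.rangeRestrict) := by
      apply ih _ (((LinearMap.funLeft R R Fin.succ).comp f).comp
        (LinearMap.ker a.rangeRestrict).subtype)
      intro x y hxy
      apply Subtype.ext
      apply hf
      have hx : a x.1 = 0 := congrArg Subtype.val (LinearMap.mem_ker.1 x.2)
      have hy : a y.1 = 0 := congrArg Subtype.val (LinearMap.mem_ker.1 y.2)
      funext i
      refine Fin.cases ?_ (fun j => ?_) i
      · exact hx.trans hy.symm
      · exact congrFun hxy j
    exact Module.finitePresentation_of_ker a.rangeRestrict hs

lemma exists_inj {R : Type u} [CommRing R] (A : Type u) [AddCommGroup A] [Module R A] :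
    ∃ (E C : ModuleCat.{u} R) (i : A →ₗ[R] E) (q : E →ₗ[R] C), Module.Injective R E ∧
      Function.Injective i ∧ Function.Surjective q ∧ Function.Exact i q := by
  let E := Injective.under (ModuleCat.of R A)
  let i : A →ₗ[R] E := (Injective.ι (ModuleCat.of R A)).hom
  refine ⟨E, ModuleCat.of R (E ⧸ LinearMap.range i), i, Submodule.mkQ _, ?_, ?_, ?_, ?_⟩
  · have : CategoryTheory.Injective (ModuleCat.of R E) :=
      inferInstanceAs (CategoryTheory.Injective (Injective.under (ModuleCat.of R A)))
    exact Module.injective_module_of_injective_object R E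
  · exact (ModuleCat.mono_iff_injective (Injective.ι (ModuleCat.of R A))).1 inferInstance
  · exact Submodule.mkQ_surjective _
  · exact LinearMap.exact_map_mkQ_range i

lemma ext_cocycle {R : Type u} [CommRing R] (M A : Type u) [AddCommGroup M] [Module R M]
    [AddCommGroup A] [Module R A] (P : ProjectiveResolution (ModuleCat.of R M))
    (S : Set (Ideal R)) :
    (∀ x : extMod R M A 1, ∃ J ∈ S, ∀ j ∈ J, j • x = 0) ↔
    (∀ φ : P.complex.X 1 ⟶ ModuleCat.of R A, P.complex.d 2 1 ≫ φ = 0 → ∃ J ∈ S, ∀ j ∈ J,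
      ∃ ψ : P.complex.X 0 ⟶ ModuleCat.of R A, P.complex.d 1 0 ≫ ψ = j • φ) := by
  let K := P.complex.linearYonedaObj R (ModuleCat.of R A)
  let T := K.sc' 0 1 2
  let e : extMod R M A 1 ≅ T.moduleCatLeftHomologyData.H :=
    P.isoExt 1 (ModuleCat.of R A) ≪≫
      ShortComplex.homologyMapIso (K.isoSc' 0 1 2 (by simp) (by simp)) ≪≫ T.moduleCatHomologyIso
  let e' := e.toLinearEquiv
  let H := LinearMap.ker T.g.hom ⧸ LinearMap.range T.moduleCatToCycles
  have e'' : extMod R M A 1 ≃ₗ[R] H := e'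
  have h1 : (∀ x : extMod R M A 1, ∃ J ∈ S, ∀ j ∈ J, j • x = 0) ↔
      (∀ x : H, ∃ J ∈ S, ∀ j ∈ J, j • x = 0) := by
    constructor
    · intro h x
      obtain ⟨J, hJ, hj⟩ := h (e''.symm x)
      refine ⟨J, hJ, fun j hjJ => ?_⟩
      apply e''.symm.injective
      rw [map_smul, hj j hjJ, map_zero]
    · intro h x
      obtain ⟨J, hJ, hj⟩ := h (e'' x)
      refine ⟨J, hJ, fun j hjJ => ?_⟩
      apply e''.injective
      rw [map_smul, hj j hjJ, map_zero]
  rw [h1]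
  constructor
  · intro h φ hφ
    obtain ⟨J, hJ, hj⟩ := h (Submodule.Quotient.mk (⟨φ, hφ⟩ : LinearMap.ker T.g.hom))
    refine ⟨J, hJ, fun j hjJ => ?_⟩
    have h2 := hj j hjJ
    rw [← Submodule.Quotient.mk_smul, Submodule.Quotient.mk_eq_zero] at h2
    obtain ⟨ψ, hψ⟩ := h2
    exact ⟨ψ, congrArg Subtype.val hψ⟩
  · intro h x
    obtain ⟨⟨φ, hφ⟩, rfl⟩ := Submodule.Quotient.mk_surjective _ x
    obtain ⟨J, hJ, hj⟩ := h φ hφ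
    refine ⟨J, hJ, fun j hjJ => ?_⟩
    obtain ⟨ψ, hψ⟩ := hj j hjJ
    rw [← Submodule.Quotient.mk_smul, Submodule.Quotient.mk_eq_zero]
    exact ⟨ψ, Subtype.ext hψ⟩

lemma ext_cocycle' {R : Type u} [CommRing R] (M : Type u) [AddCommGroup M] [Module R M] :
    ∃ (P₂ P₁ P₀ : ModuleCat.{u} R) (d₂ : P₂ →ₗ[R] P₁) (d₁ : P₁ →ₗ[R] P₀) (p : P₀ →ₗ[R] M),
      Module.Projective R P₀ ∧ Function.Exact d₂ d₁ ∧ Function.Exact d₁ p ∧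
      Function.Surjective p ∧
      ∀ (A : Type u) [AddCommGroup A] [Module R A] (S : Set (Ideal R)),
      ((∀ x : extMod R M A 1, ∃ J ∈ S, ∀ j ∈ J, j • x = 0) ↔
      (∀ φ : P₁ →ₗ[R] A, (∀ x, φ (d₂ x) = 0) → ∃ J ∈ S, ∀ j ∈ J,
        ∃ ψ : P₀ →ₗ[R] A, ∀ x, ψ (d₁ x) = j • φ x)) := by
  let P := projectiveResolution (ModuleCat.of R M)
  refine ⟨P.complex.X 2, P.complex.X 1, P.complex.X 0, (P.complex.d 2 1).hom,
    (P.complex.d 1 0).hom, (P.π.f 0).hom, ?_, ?_, ?_, ?_, ?_⟩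
  · have := P.projective 0
    exact (IsProjective.iff_projective (P.complex.X 0)).2 (P.projective 0)
  · exact (ShortComplex.ShortExact.moduleCat_exact_iff_function_exact _).1 (P.exact_succ 0)
  · exact (ShortComplex.ShortExact.moduleCat_exact_iff_function_exact _).1 P.exact₀
  · exact (ModuleCat.epi_iff_surjective (P.π.f 0)).1 inferInstance
  · intro A _ _ S
    rw [ext_cocycle M A P S]
    constructor
    · intro h φ hφ
      obtain ⟨J, hJ, hj⟩ := h (ModuleCat.ofHom φ) (by ext x; exact hφ x)
      refine ⟨J, hJ, fun j hjJ => ?_⟩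
      obtain ⟨ψ, hψ⟩ := hj j hjJ
      exact ⟨ψ.hom, fun x => congrArg (fun t => t.hom x) hψ⟩
    · intro h φ hφ
      obtain ⟨J, hJ, hj⟩ := h φ.hom (fun x => congrArg (fun t => t.hom x) hφ)
      refine ⟨J, hJ, fun j hjJ => ?_⟩
      obtain ⟨ψ, hψ⟩ := hj j hjJ
      exact ⟨ModuleCat.ofHom ψ, by ext x; exact hψ x⟩

lemma ext_inj {R : Type u} [CommRing R] (M A E C : Type u) [AddCommGroup M] [Module R M]
    [AddCommGroup A] [Module R A] [AddCommGroup E] [Module R E] [AddCommGroup C] [Module R C]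
    (i : A →ₗ[R] E) (q : E →ₗ[R] C) (hE : Module.Injective R E)
    (hi : Function.Injective i) (hq : Function.Surjective q) (hiq : Function.Exact i q)
    (S : Set (Ideal R)) :
    (∀ x : extMod R M A 1, ∃ J ∈ S, ∀ j ∈ J, j • x = 0) ↔
    (∀ h : M →ₗ[R] C, ∃ J ∈ S, ∀ j ∈ J, ∃ k : M →ₗ[R] E, ∀ x, q (k x) = j • h x) := by
  obtain ⟨P₂, P₁, P₀, d₂, d₁, p, hP, h21, h10, hp, H⟩ := ext_cocycle' (R := R) M
  rw [H A S]
  constructor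
  · intro hφ h
    obtain ⟨l, hl⟩ := Module.projective_lifting_property q (h.comp p) hq
    have hl' : ∀ x, q (l x) = h (p x) := fun x => LinearMap.congr_fun hl x
    obtain ⟨φ, hφi⟩ := fac_inj i q hi hiq (l.comp d₁)
      (fun x => by simp [hl', h10.apply_apply_eq_zero])
    obtain ⟨J, hJ, hj⟩ := hφ φ (fun x => hi (by simp [hφi, h21.apply_apply_eq_zero]))
    refine ⟨J, hJ, fun j hjJ => ?_⟩
    obtain ⟨ψ, hψ⟩ := hj j hjJ
    obtain ⟨k, hk⟩ := fac_surj d₁ p hp h10 (j • l - i.comp ψ) (fun x => by simp [hψ, hφi])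
    refine ⟨k, fun x => ?_⟩
    obtain ⟨y, rfl⟩ := hp x
    simp [hk, hl', hiq.apply_apply_eq_zero]
  · intro hh φ hφ
    obtain ⟨φ', hφ'⟩ := fac_surj d₂ d₁.rangeRestrict d₁.surjective_rangeRestrict
      (fun y => by
        rw [← h21 y]
        exact ⟨fun h => congrArg Subtype.val h, fun h => Subtype.ext h⟩) φ hφ
    obtain ⟨l, hl⟩ := hE.out (LinearMap.range d₁).subtype (Submodule.injective_subtype _)
      (i.comp φ')
    have hl' : ∀ x, l (d₁ x) = i (φ x) := by
      intro x
      have := hl (d₁.rangeRestrict x)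
      rw [LinearMap.comp_apply, hφ'] at this
      exact this
    obtain ⟨h, hh'⟩ := fac_surj d₁ p hp h10 (q.comp l)
      (fun x => by simp [hl', hiq.apply_apply_eq_zero])
    obtain ⟨J, hJ, hj⟩ := hh h
    refine ⟨J, hJ, fun j hjJ => ?_⟩
    obtain ⟨k, hk⟩ := hj j hjJ
    obtain ⟨ψ, hψ⟩ := fac_inj i q hi hiq (j • l - k.comp p) (fun x => by simp [hk, hh'])
    refine ⟨ψ, fun x => hi ?_⟩
    simp [hψ, hl', h10.apply_apply_eq_zero]

lemma sub_inj {R : Type u} [CommRing R] (M A E C : Type u) [AddCommGroup M] [Module R M]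
    [AddCommGroup A] [Module R A] [AddCommGroup E] [Module R E] [AddCommGroup C] [Module R C]
    (i : A →ₗ[R] E) (q : E →ₗ[R] C) (hE : Module.Injective R E)
    (hi : Function.Injective i) (hq : Function.Surjective q) (hiq : Function.Exact i q) :
    Subsingleton (extMod R M A 1) ↔
    (∀ h : M →ₗ[R] C, ∃ k : M →ₗ[R] E, ∀ x, q (k x) = h x) := by
  have key := ext_inj M A E C i q hE hi hq hiq {⊤}
  constructor
  · intro hs h
    obtain ⟨J, hJ, hj⟩ := key.1 (fun x => ⟨⊤, rfl, fun j _ => Subsingleton.elim _ _⟩) h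
    obtain rfl : J = ⊤ := hJ
    obtain ⟨k, hk⟩ := hj 1 trivial
    exact ⟨k, fun x => by simpa using hk x⟩
  · intro hs
    have h0 : ∀ x : extMod R M A 1, x = 0 := by
      intro x
      obtain ⟨J, hJ, hj⟩ := key.2 (fun h => by
        obtain ⟨k, hk⟩ := hs h
        exact ⟨⊤, rfl, fun j _ => ⟨j • k, fun x => by simp [hk]⟩⟩) x
      obtain rfl : J = ⊤ := hJ
      simpa using hj 1 trivial
    exact ⟨fun x y => (h0 x).trans (h0 y).symm⟩

lemma pure_inj {R : Type u} [CommRing R] (A E C : Type u)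
    [AddCommGroup A] [Module R A] [AddCommGroup E] [Module R E] [AddCommGroup C] [Module R C]
    (i : A →ₗ[R] E) (q : E →ₗ[R] C) (hE : Module.Injective R E)
    (hi : Function.Injective i) (hq : Function.Surjective q) (hiq : Function.Exact i q) :
    IsAbsolutelyWPure R A ↔ ∀ (N : Type u) [AddCommGroup N] [Module R N],
      Module.FinitePresentation R N → ∀ h : N →ₗ[R] C, ∃ J, IsGVIdeal R J ∧
        ∀ j ∈ J, ∃ k : N →ₗ[R] E, ∀ x, q (k x) = j • h x := by
  constructor
  · intro hA N _ _ hN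
    exact (ext_inj N A E C i q hE hi hq hiq {J | IsGVIdeal R J}).1 (hA N hN)
  · intro hA N _ _ hN
    exact (ext_inj N A E C i q hE hi hq hiq {J | IsGVIdeal R J}).2 (hA N hN)

lemma pure_quot {R : Type u} [CommRing R] (hR : IsCoherentRing R) (A E C : Type u)
    [AddCommGroup A] [Module R A] [AddCommGroup E] [Module R E] [AddCommGroup C] [Module R C]
    (i : A →ₗ[R] E) (q : E →ₗ[R] C) (hE : Module.Injective R E)
    (hi : Function.Injective i) (hq : Function.Surjective q) (hiq : Function.Exact i q)
    (hA : IsAbsolutelyWPure R A) : IsAbsolutelyWPure R C := by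
  obtain ⟨E₂, D, i₂, q₂, hE₂, hi₂, hq₂, hiq₂⟩ := exists_inj (R := R) C
  rw [pure_inj C E₂ D i₂ q₂ hE₂ hi₂ hq₂ hiq₂]
  rw [pure_inj A E C i q hE hi hq hiq] at hA
  intro N _ _ hN h
  obtain ⟨n, p, hp⟩ := Module.Finite.exists_fin' R N
  have hk := Module.FinitePresentation.fg_ker p hp
  have : Module.Finite R (LinearMap.ker p) := Module.Finite.iff_fg.2 hk
  have hK : Module.FinitePresentation R (LinearMap.ker p) :=
    coherent_sub hR n _ (LinearMap.ker p).subtype (Submodule.injective_subtype _)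
  obtain ⟨l, hl⟩ := Module.projective_lifting_property q₂ (h.comp p) hq₂
  have hl' : ∀ x, q₂ (l x) = h (p x) := fun x => LinearMap.congr_fun hl x
  obtain ⟨φ, hφ⟩ := fac_inj i₂ q₂ hi₂ hiq₂ (l.comp (LinearMap.ker p).subtype)
    (fun x => by simp [hl'])
  obtain ⟨J, hJ, hj⟩ := hA _ hK φ
  refine ⟨J, hJ, fun j hjJ => ?_⟩
  obtain ⟨k, hk⟩ := hj j hjJ
  obtain ⟨k', hk'⟩ := hE.out (LinearMap.ker p).subtype (Submodule.injective_subtype _) k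
  obtain ⟨m, hm⟩ := fac_surj (LinearMap.ker p).subtype p hp (LinearMap.exact_subtype_ker_map p)
    (j • l - i₂.comp (q.comp k')) (fun x => by
      have h1 := hk' x
      have h2 := hφ x
      simp only [LinearMap.comp_apply] at h2
      simp only [LinearMap.sub_apply, LinearMap.smul_apply, LinearMap.comp_apply]
      rw [h1, hk, map_smul, h2, sub_self])
  refine ⟨m, fun x => ?_⟩
  obtain ⟨y, rfl⟩ := hp x
  simp [hm, hl', hiq₂.apply_apply_eq_zero]

end WFPAux

/-- Over a coherent ring, given `0 → M'' → M' → M → 0` exact with `M` `w`-FP-projective,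
`M'` is `w`-FP-projective iff `M''` is. -/
theorem isWFPProjective_iff_of_exact (R : Type u) [CommRing R] (hR : IsCoherentRing R)
    (M'' M' M : Type u) [AddCommGroup M''] [Module R M''] [AddCommGroup M'] [Module R M']
    [AddCommGroup M] [Module R M]
    (f : M'' →ₗ[R] M') (g : M' →ₗ[R] M) (hf : Function.Injective f)
    (hg : Function.Surjective g) (hfg : Function.Exact f g)
    (hM : IsWFPProjective R M) :
    IsWFPProjective R M' ↔ IsWFPProjective R M'' := by
  constructor
  · intro hM' A _ _ hA
    obtain ⟨E, C, i, q, hE, hi, hq, hiq⟩ := WFPAux.exists_inj (R := R) A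
    have hC := WFPAux.pure_quot hR A E C i q hE hi hq hiq hA
    obtain ⟨E₂, D, i₂, q₂, hE₂, hi₂, hq₂, hiq₂⟩ := WFPAux.exists_inj (R := R) C
    have h1 := (WFPAux.sub_inj M C E₂ D i₂ q₂ hE₂ hi₂ hq₂ hiq₂).1 (hM C hC)
    have h2 := (WFPAux.sub_inj M' A E C i q hE hi hq hiq).1 (hM' A hA)
    rw [WFPAux.sub_inj M'' A E C i q hE hi hq hiq]
    intro h
    obtain ⟨l, hl⟩ := hE₂.out f hf (i₂.comp h)
    obtain ⟨t, ht⟩ := WFPAux.fac_surj f g hg hfg (q₂.comp l)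
      (fun x => by simp [hl, hiq₂.apply_apply_eq_zero])
    obtain ⟨k, hk⟩ := h1 t
    obtain ⟨h', hh'⟩ := WFPAux.fac_inj i₂ q₂ hi₂ hiq₂ (l - k.comp g)
      (fun x => by simp [hk, ht])
    obtain ⟨m, hm⟩ := h2 h'
    refine ⟨m.comp f, fun x => hi₂ ?_⟩
    simp [hm, hh', hl, hfg.apply_apply_eq_zero]
  · intro hM'' A _ _ hA
    obtain ⟨E, C, i, q, hE, hi, hq, hiq⟩ := WFPAux.exists_inj (R := R) A
    have h1 := (WFPAux.sub_inj M A E C i q hE hi hq hiq).1 (hM A hA)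
    have h2 := (WFPAux.sub_inj M'' A E C i q hE hi hq hiq).1 (hM'' A hA)
    rw [WFPAux.sub_inj M' A E C i q hE hi hq hiq]
    intro h
    obtain ⟨k, hk⟩ := h2 (h.comp f)
    obtain ⟨k', hk'⟩ := hE.out f hf k
    obtain ⟨t, ht⟩ := WFPAux.fac_surj f g hg hfg (h - q.comp k')
      (fun x => by simp [hk', hk])
    obtain ⟨m, hm⟩ := h1 t
    exact ⟨k' + m.comp g, fun x => by simp [hm, ht]⟩
end
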